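/- arXiv:0908.4024 — 7 statements merged into one kernel-verified Lean document; each statement's English description precedes it below -/
import Mathlib

section
/- Let m and n be positive integers with n > m, and let (a_{k,l}) be an m × n matrix with rational integer entries. Let A be a positive integer such that |a_{k,l}| ≤ A for all 1 ≤ k ≤ m, 1 ≤ l ≤ n. Then the system of homogeneous linear equations a_{k,1} x_1 + ⋯ + a_{k,n} x_n = 0 (1 ≤ k ≤ m) has a solution in rational integers x_1, …, x_n, not all zero, satisfying |x_j| < 1 + (nA)^{m/(n−m)} for all 1 ≤ j ≤ n. -/
/-- **Thue–Siegel Lemma.** A homogeneous system of `m` linear equations with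
rational integer coefficients bounded by `A`, in `n > m` unknowns, has a
nontrivial integer solution with `|x j| < 1 + (n A)^{m/(n-m)}`. -/
theorem thue_siegel_lemma
    (m n : ℕ) (hm : 0 < m) (hmn : m < n)
    (a : Fin m → Fin n → ℤ) (A : ℕ) (hA : 0 < A)
    (hbound : ∀ k l, |a k l| ≤ (A : ℤ)) :
    ∃ x : Fin n → ℤ, x ≠ 0 ∧ (∀ k, ∑ l, a k l * x l = 0) ∧
      ∀ j, (|x j| : ℝ) < 1 + ((n * A : ℕ) : ℝ) ^ ((m : ℝ) / ((n : ℝ) - (m : ℝ))) := by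
  have hn : 0 < n := hm.trans hmn
  obtain ⟨t, ht0, hAt, hle⟩ := Int.Matrix.exists_ne_zero_int_vec_norm_le
    (Matrix.of a) (by simpa using hmn) (by simpa using hm)
  refine ⟨t, ht0, fun k => ?_, fun j => ?_⟩
  · have h := congrFun hAt k
    simpa [Matrix.mulVec, dotProduct] using h
  · have h1 : (|t j| : ℝ) ≤ ‖t‖ := by
      have h := norm_le_pi_norm t j
      rwa [Int.norm_eq_abs] at h
    refine lt_of_le_of_lt (h1.trans (hle.trans ?_)) (lt_one_add _)
    rw [Fintype.card_fin, Fintype.card_fin, Nat.cast_mul]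
    have hA1 : (1 : ℝ) ≤ (A : ℝ) := by exact_mod_cast hA
    refine Real.rpow_le_rpow (by positivity) ?_ ?_
    · refine mul_le_mul_of_nonneg_left (max_le hA1 ?_) (by positivity)
      rw [Matrix.norm_le_iff (by positivity)]
      intro i l
      rw [Int.norm_eq_abs]
      exact_mod_cast hbound i l
    · have : (m : ℝ) < n := by exact_mod_cast hmn
      exact div_nonneg (by positivity) (by linarith)
end

section
/- Let n ≥ 1 and let S be a nonempty finite subset of ℂ^n. For each integer t ≥ 1 let ω_t(S) denote the smallest total degree of a nonzero polynomial P ∈ ℂ[z_1, …, z_n] having a zero of multiplicity at least t at every point of S. Then the sequence ω_t(S)/t converges as t → ∞ to a limit Ω(S), and for every t ≥ 1 one has ω_t(S)/(t + n − 1) ≤ Ω(S) ≤ ω_t(S)/t ≤ ω_1(S). -/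
/-- `f : ℂ^n → ℂ` has a zero of multiplicity at least `t` at `w`: all derivatives
of total order strictly less than `t` vanish at `w`. -/
def HasZeroOfMult (n : ℕ) (f : (Fin n → ℂ) → ℂ) (w : Fin n → ℂ) (t : ℕ) : Prop :=
  ∀ k < t, iteratedFDeriv ℂ k f w = 0

/-- `ω_t(S)`: the smallest total degree of a nonzero polynomial having a zero of
multiplicity at least `t` at every point of `S`. -/
noncomputable def omegaT (n : ℕ) (S : Set (Fin n → ℂ)) (t : ℕ) : ℕ :=
  sInf {D : ℕ | ∃ P : MvPolynomial (Fin n) ℂ, P ≠ 0 ∧ P.totalDegree = D ∧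
    ∀ w ∈ S, HasZeroOfMult n (fun z => MvPolynomial.eval z P) w t}

section helpers
open MvPolynomial

variable {n : ℕ} {R : Type*} [CommRing R]

/-- All coefficients of degree `< t` vanish. -/
def LowV (t : ℕ) (F : MvPolynomial (Fin n) R) : Prop :=
  ∀ m : Fin n →₀ ℕ, m.degree < t → coeff m F = 0

/-- Translation by `w`. -/
noncomputable def trl (w : Fin n → R) : MvPolynomial (Fin n) R →ₐ[R] MvPolynomial (Fin n) R :=
  aeval (fun i => X i + C (w i))

def VanAt (w : Fin n → R) (t : ℕ) (f : MvPolynomial (Fin n) R) : Prop := LowV t (trl w f)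

lemma lowV_zero (F : MvPolynomial (Fin n) R) : LowV 0 F := fun m h => absurd h (by omega)

lemma LowV.mul {s t : ℕ} {F G : MvPolynomial (Fin n) R} (hF : LowV s F) (hG : LowV t G) :
    LowV (s + t) (F * G) := by
  classical
  intro m hm
  rw [coeff_mul]
  refine Finset.sum_eq_zero fun x hx => ?_
  rw [Finset.HasAntidiagonal.mem_antidiagonal] at hx
  have : x.1.degree + x.2.degree = m.degree := by rw [← hx, map_add]
  by_cases h : x.1.degree < s
  · rw [hF _ h, zero_mul]
  · rw [hG _ (by omega), mul_zero]

lemma LowV.sum {ι : Type*} {t : ℕ} (s : Finset ι) (F : ι → MvPolynomial (Fin n) R)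
    (h : ∀ i ∈ s, LowV t (F i)) : LowV t (∑ i ∈ s, F i) := by
  intro m hm
  rw [coeff_sum]
  exact Finset.sum_eq_zero fun i hi => h i hi m hm

lemma VanAt.mul {w : Fin n → R} {s t : ℕ} {f g : MvPolynomial (Fin n) R}
    (hf : VanAt w s f) (hg : VanAt w t g) : VanAt w (s + t) (f * g) := by
  unfold VanAt at *
  rw [map_mul]
  exact hf.mul hg

lemma degree_le_td {f : MvPolynomial (Fin n) R} {m : Fin n →₀ ℕ} (h : coeff m f ≠ 0) :
    m.degree ≤ f.totalDegree := le_totalDegree (mem_support_iff.2 h)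

lemma td_le {f : MvPolynomial (Fin n) R} {d : ℕ}
    (h : ∀ m : Fin n →₀ ℕ, coeff m f ≠ 0 → m.degree ≤ d) : f.totalDegree ≤ d :=
  Finset.sup_le fun m hm => h m (mem_support_iff.1 hm)

lemma trl_trl (w v : Fin n → R) (f : MvPolynomial (Fin n) R) :
    trl w (trl v f) = trl (w + v) f := by
  have : (trl w).comp (trl v) = trl (w + v) := by
    ext i : 1
    simp [trl, add_assoc]
  exact DFunLike.congr_fun this f

lemma trl_zero (f : MvPolynomial (Fin n) R) : trl 0 f = f := by
  have : trl (0 : Fin n → R) = AlgHom.id R _ := by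
    ext i : 1
    simp [trl]
  rw [this]; rfl

lemma trl_map {R' : Type*} [CommRing R'] (φ : R →+* R') (w : Fin n → R)
    (f : MvPolynomial (Fin n) R) : trl (fun i => φ (w i)) (map φ f) = map φ (trl w f) := by
  induction f using MvPolynomial.induction_on with
  | C a => simp [trl]
  | add p q hp hq => simp [hp, hq]
  | mul_X p i hp => rw [map_mul, map_mul, map_mul, map_mul, hp]; simp [trl]

lemma eval_trl (w z : Fin n → R) (f : MvPolynomial (Fin n) R) :
    eval z (trl w f) = eval (z + w) f := by
  induction f using MvPolynomial.induction_on with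
  | C a => simp [trl]
  | add p q hp hq => simp [hp, hq]
  | mul_X p i hp => rw [map_mul, map_mul, map_mul, hp]; simp [trl]

lemma contDiff_evalP (P : MvPolynomial (Fin n) ℂ) (k : WithTop ℕ∞) :
    ContDiff ℂ k (fun z : Fin n → ℂ => eval z P) :=
  contDiff_iff_contDiffAt.2 fun x => (AnalyticOnNhd.eval_mvPolynomial P x trivial).contDiffAt

lemma fderiv_evalP (P : MvPolynomial (Fin n) ℂ) (z : Fin n → ℂ) :
    HasFDerivAt (fun z : Fin n → ℂ => eval z P)
      (∑ i, eval z (pderiv i P) • (ContinuousLinearMap.proj (R := ℂ) (φ := fun _ : Fin n => ℂ) i)) z := by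
  induction P using MvPolynomial.induction_on with
  | C a => 
    have h := hasFDerivAt_const (𝕜 := ℂ) a z
    convert! h using 1
    · funext z; simp
    · ext v; simp
  | add p q hp hq =>
    simp only [map_add]
    convert! hp.add hq using 1
    ext v
    simp [add_mul, Finset.sum_add_distrib]
  | mul_X p i hp =>
    have h2 : HasFDerivAt (fun z : Fin n → ℂ => z i)
      (ContinuousLinearMap.proj (R := ℂ) (φ := fun _ : Fin n => ℂ) i) z :=
      (ContinuousLinearMap.proj (R := ℂ) (φ := fun _ : Fin n => ℂ) i).hasFDerivAt
    have := hp.mul h2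
    simp only [map_mul, eval_X]
    convert! this using 1
    ext v
    simp [pderiv_X, Finset.sum_add_distrib, add_mul, Finset.mul_sum, Pi.single_apply]
    simp [apply_ite, ite_mul]
    ring_nf

lemma hasZero_succ_iff (P : MvPolynomial (Fin n) ℂ) (w : Fin n → ℂ) (t : ℕ) :
    HasZeroOfMult n (fun z => eval z P) w (t + 1) ↔
      eval w P = 0 ∧ ∀ i, HasZeroOfMult n (fun z => eval z (pderiv i P)) w t := by
  have hfd : fderiv ℂ (fun z : Fin n → ℂ => eval z P) = fun z => 
      (∑ i, eval z (pderiv i P) • (ContinuousLinearMap.proj (R := ℂ) (φ := fun _ : Fin n => ℂ) i)) :=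
    funext fun z => (fderiv_evalP P z).fderiv
  have hs : ∀ k, iteratedFDeriv ℂ (k+1) (fun z : Fin n → ℂ => eval z P) w = 0 ↔
      iteratedFDeriv ℂ k (fderiv ℂ (fun z : Fin n → ℂ => eval z P)) w = 0 := fun k => by
    rw [← norm_eq_zero, ← norm_iteratedFDeriv_fderiv, norm_eq_zero]
  constructor
  · intro h
    refine ⟨?_, fun i k hk => ?_⟩
    · have := congrArg (fun f => f 0) (h 0 (by omega))
      simpa using this
    · have h1 := (hs k).1 (h (k+1) (by omega))
      have : (fun z : Fin n → ℂ => eval z (pderiv i P)) =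
        (ContinuousLinearMap.apply ℂ ℂ (Pi.single i 1 : Fin n → ℂ)) ∘
          (fderiv ℂ (fun z : Fin n → ℂ => eval z P)) := by
        funext z
        simp [hfd, Pi.single_apply]
      rw [this, ContinuousLinearMap.iteratedFDeriv_comp_left (n := k) _ _ le_rfl, h1]
      · ext; simp
      · exact ((contDiff_evalP P (k+1)).fderiv_right le_rfl).contDiffAt
  · rintro ⟨h0, h1⟩ k hk
    rcases k with _ | k
    · ext; simpa using h0
    · rw [hs, hfd, iteratedFDeriv_fun_sum_apply]
      · refine Finset.sum_eq_zero fun i _ => ?_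
        have : (fun z : Fin n → ℂ => eval z (pderiv i P) • (ContinuousLinearMap.proj (R := ℂ) (φ := fun _ : Fin n => ℂ) i)) =
          (ContinuousLinearMap.smulRight (ContinuousLinearMap.id ℂ ℂ) (ContinuousLinearMap.proj (R := ℂ) (φ := fun _ : Fin n => ℂ) i)) ∘ (fun z : Fin n → ℂ => eval z (pderiv i P)) := by
          funext z; ext; simp
        rw [this, ContinuousLinearMap.iteratedFDeriv_comp_left (n := k) _ _ le_rfl, h1 i k (by omega)]
        · ext; simp
        · exact (contDiff_evalP _ _).contDiffAt
      · intro i _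
        exact ((contDiff_evalP _ _).smul contDiff_const).contDiffAt

lemma lowV_succ_iff (Q : MvPolynomial (Fin n) ℂ) (t : ℕ) :
    LowV (t+1) Q ↔ coeff 0 Q = 0 ∧ ∀ i, LowV t (pderiv i Q) := by
  constructor
  · intro h
    refine ⟨h 0 (by simp), fun i m hm => ?_⟩
    rw [coeff_pderiv, h _ (by simpa using hm), zero_mul]
  · rintro ⟨h0, h1⟩ m hm
    by_cases hm0 : m = 0
    · rw [hm0, h0]
    · obtain ⟨i, hi⟩ := Finsupp.ne_iff.1 hm0
      have hle : Finsupp.single i 1 ≤ m := by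
        rw [Finsupp.single_le_iff]; simp at hi; omega
      obtain ⟨m', rfl⟩ := exists_add_of_le hle
      rw [map_add] at hm
      have := h1 i m' (by simp at hm; omega)
      rw [coeff_pderiv, mul_eq_zero, add_comm] at this
      exact this.resolve_right (Nat.cast_add_one_ne_zero (m' i))

lemma hasZero_zero_iff (t : ℕ) (Q : MvPolynomial (Fin n) ℂ) :
    HasZeroOfMult n (fun z => eval z Q) 0 t ↔ LowV t Q := by
  induction t generalizing Q with
  | zero => exact ⟨fun _ => lowV_zero _, fun _ k hk => absurd hk (by omega)⟩
  | succ t ih =>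
    rw [hasZero_succ_iff, lowV_succ_iff]
    simp only [ih]
    rw [show eval (0 : Fin n → ℂ) Q = coeff 0 Q by
      rw [show (eval (0 : Fin n → ℂ)) Q = constantCoeff Q by simp [eval_zero], constantCoeff_eq]]

lemma hasZero_iff (w : Fin n → ℂ) (t : ℕ) (P : MvPolynomial (Fin n) ℂ) :
    HasZeroOfMult n (fun z => eval z P) w t ↔ VanAt w t P := by
  unfold VanAt
  rw [← hasZero_zero_iff]
  simp only [HasZeroOfMult, eval_trl]
  simp only [iteratedFDeriv_comp_add_right (f := fun z : Fin n → ℂ => eval z P), zero_add]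

end helpers

section charp
open MvPolynomial

variable {n : ℕ} {K : Type*} [Field K]

lemma exists_cart (q : ℕ) (hq : 0 < q) (r : K →+ K) (a : Fin n →₀ ℕ) (f : MvPolynomial (Fin n) K) :
    ∃ g : MvPolynomial (Fin n) K, ∀ m, coeff m g = r (coeff (q • m + a) f) := by
  classical
  let s := (Finsupp.finite_of_degree_le (σ := Fin n) f.totalDegree).toFinset
  refine ⟨∑ m ∈ s, monomial m (r (coeff (q • m + a) f)), fun m => ?_⟩
  rw [coeff_sum]
  simp only [coeff_monomial]
  rw [Finset.sum_ite_eq']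
  split_ifs with h
  · rfl
  · by_cases hc : coeff (q • m + a) f = 0
    · rw [hc, map_zero]
    · exfalso
      apply h
      have h2 := degree_le_td hc
      rw [map_add, map_nsmul, smul_eq_mul] at h2
      simp only [s, Set.Finite.mem_toFinset, Set.mem_ofPred_eq]
      nlinarith [Nat.zero_le a.degree, Nat.zero_le m.degree]

noncomputable def cart (q : ℕ) (hq : 0 < q) (r : K →+ K) (a : Fin n →₀ ℕ) :
    MvPolynomial (Fin n) K →+ MvPolynomial (Fin n) K where
  toFun f := (exists_cart q hq r a f).choose
  map_zero' := by
    ext m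
    rw [(exists_cart q hq r a 0).choose_spec]
    simp
  map_add' f g := by
    ext m
    rw [coeff_add, (exists_cart q hq r a _).choose_spec, (exists_cart q hq r a _).choose_spec,
      (exists_cart q hq r a _).choose_spec, coeff_add, map_add]

lemma coeff_cart (q : ℕ) (hq : 0 < q) (r : K →+ K) (a : Fin n →₀ ℕ) (f : MvPolynomial (Fin n) K)
    (m : Fin n →₀ ℕ) : coeff m (cart q hq r a f) = r (coeff (q • m + a) f) :=
  (exists_cart q hq r a f).choose_spec m

lemma cart_pow_mul (p : ℕ) [Fact p.Prime] [CharP K p] (e : ℕ) (hq : 0 < p ^ e) (r : K →+ K)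
    (hr : ∀ x y, r (x ^ (p ^ e) * y) = x * r y) (a : Fin n →₀ ℕ) (ha : ∀ i, a i < p ^ e)
    (u f : MvPolynomial (Fin n) K) :
    cart (p ^ e) hq r a (u ^ (p ^ e) * f) = u * cart (p ^ e) hq r a f := by
  classical
  induction u using MvPolynomial.induction_on' with
  | add u v hu hv =>
    rw [add_pow_char_pow, add_mul, map_add, hu, hv, add_mul]
  | monomial s c =>
    ext m
    rw [coeff_cart, monomial_pow, coeff_monomial_mul', coeff_monomial_mul']
    have hiff : p ^ e • s ≤ p ^ e • m + a ↔ s ≤ m := by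
      simp only [Finsupp.le_def, Finsupp.add_apply, Finsupp.smul_apply, smul_eq_mul]
      refine forall_congr' fun i => ⟨fun h => ?_, fun h => ?_⟩
      · by_contra hc
        have := ha i
        have h3 : m i + 1 ≤ s i := by omega
        have := Nat.mul_le_mul_left (p ^ e) h3
        rw [mul_add] at this
        omega
      · exact (Nat.mul_le_mul_left _ h).trans (Nat.le_add_right _ _)
    by_cases h : s ≤ m
    · rw [if_pos (hiff.2 h), if_pos h, hr, coeff_cart]
      congr 3
      ext i
      have := Nat.mul_le_mul_left (p ^ e) (h i)
      simp [Nat.mul_sub]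
      omega
    · rw [if_neg (fun h' => h (hiff.1 h')), if_neg h, map_zero]

lemma cart_totalDegree (q : ℕ) (hq : 0 < q) (r : K →+ K) (a : Fin n →₀ ℕ)
    (f : MvPolynomial (Fin n) K) : q * (cart q hq r a f).totalDegree ≤ f.totalDegree := by
  rw [mul_comm, ← Nat.le_div_iff_mul_le hq]
  refine td_le fun m hm => ?_
  rw [coeff_cart] at hm
  have h2 := degree_le_td (f := f) (m := q • m + a) (fun h => hm (by rw [h, map_zero]))
  rw [map_add, map_nsmul, smul_eq_mul] at h2
  rw [Nat.le_div_iff_mul_le hq, mul_comm]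
  omega

lemma prodX_lowV (c : Fin n → ℕ) (t : ℕ) (h : t ≤ ∑ i, c i) :
    LowV t (∏ i, (X i : MvPolynomial (Fin n) K) ^ c i) := by
  classical
  intro m hm
  have : (∏ i, (X i : MvPolynomial (Fin n) K) ^ c i) = monomial (Finsupp.equivFunOnFinite.symm c) 1 := by
    rw [monomial_eq, Finsupp.prod_fintype _ _ (by simp)]
    simp
  rw [this, coeff_monomial, if_neg]
  rintro rfl
  rw [Finsupp.degree_eq_sum] at hm
  simp at hm
  omega

lemma cart_vanAt (hn : 1 ≤ n) (p : ℕ) [Fact p.Prime] [CharP K p] (e : ℕ) (hq : 0 < p ^ e) (r : K →+ K)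
    (hr : ∀ x y, r (x ^ (p ^ e) * y) = x * r y) (a : Fin n →₀ ℕ) (ha : ∀ i, a i < p ^ e)
    (w : Fin n → K) (t : ℕ) (f : MvPolynomial (Fin n) K)
    (hf : VanAt w ((t + n - 1) * p ^ e) f) : VanAt w t (cart (p ^ e) hq r a f) := by
  have h1 : f = trl (-w) (trl w f) := by rw [trl_trl, neg_add_cancel, trl_zero]
  have h2 : f = ∑ m ∈ (trl w f).support, trl (-w) (monomial m (coeff m (trl w f))) := by
    conv_lhs => rw [h1, (trl w f).as_sum, map_sum]
  unfold VanAt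
  rw [h2, map_sum, map_sum]
  refine LowV.sum _ _ fun m hm => ?_
  have hdeg : (t + n - 1) * p ^ e ≤ m.degree := by
    by_contra hc
    exact mem_support_iff.1 hm (hf m (by omega))
  generalize coeff m (trl w f) = c
  have h3 : trl (-w) (monomial m c) = (∏ i, (X i - C (w i)) ^ (m i / p ^ e)) ^ (p ^ e) *
      (C c * ∏ i, (X i - C (w i)) ^ (m i % p ^ e)) := by
    rw [trl, aeval_monomial, Finsupp.prod_fintype _ _ (by simp), ← Finset.prod_pow,
      mul_left_comm, ← Finset.prod_mul_distrib]
    congr 1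
    refine Finset.prod_congr rfl fun i _ => ?_
    rw [← pow_mul, ← pow_add, Nat.div_add_mod']
    simp [sub_eq_add_neg]
  rw [h3, cart_pow_mul p e hq r hr a ha, map_mul, ← add_zero t]
  refine LowV.mul ?_ (lowV_zero _)
  have h4 : trl w (∏ i, (X i - C (w i)) ^ (m i / p ^ e)) = ∏ i, X i ^ (m i / p ^ e) := by
    simp [trl, map_prod]
  rw [h4]
  apply prodX_lowV
  have h5 : m.degree ≤ ∑ i, (p ^ e * (m i / p ^ e) + (p ^ e - 1)) := by
    rw [Finsupp.degree_eq_sum]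
    refine Finset.sum_le_sum fun i _ => ?_
    have h6 := Nat.div_add_mod (m i) (p ^ e)
    have h7 := Nat.mod_lt (m i) hq
    omega
  rw [Finset.sum_add_distrib, ← Finset.mul_sum, Finset.sum_const, Finset.card_univ, Fintype.card_fin,
    smul_eq_mul] at h5
  by_contra hc
  push Not at hc
  obtain ⟨t', rfl⟩ : ∃ t', t = t' + 1 := ⟨t - 1, by omega⟩
  have h8 : p ^ e * ∑ i, m i / p ^ e ≤ p ^ e * t' := Nat.mul_le_mul_left _ (by omega)
  obtain ⟨q', hq'⟩ : ∃ q', p ^ e = q' + 1 := ⟨p ^ e - 1, by omega⟩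
  have h9 : t' + 1 + n - 1 = t' + n := by omega
  rw [h9] at hdeg
  generalize ∑ i, m i / p ^ e = Z at *
  rw [hq'] at hdeg h5 h8
  simp only [Nat.add_sub_cancel] at h5
  nlinarith

lemma charp_main (hn : 1 ≤ n) (p : ℕ) [Fact p.Prime] [CharP K p] [PerfectRing K p] (e : ℕ)
    {ι : Type*} (w : ι → Fin n → K) (t : ℕ) (f : MvPolynomial (Fin n) K) (hf0 : f ≠ 0)
    (hf : ∀ s, VanAt (w s) ((t + n - 1) * p ^ e) f) :
    ∃ g : MvPolynomial (Fin n) K, g ≠ 0 ∧ (∀ s, VanAt (w s) t g) ∧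
      p ^ e * g.totalDegree ≤ f.totalDegree := by
  have hq : 0 < p ^ e := pow_pos (Fact.out : p.Prime).pos e
  let r : K →+ K := (iterateFrobeniusEquiv K p e).symm.toRingHom.toAddMonoidHom
  have hr : ∀ x y, r (x ^ (p ^ e) * y) = x * r y := by
    intro x y
    have : (iterateFrobeniusEquiv K p e).symm (x ^ (p ^ e) * y)
      = x * (iterateFrobeniusEquiv K p e).symm y := by
      rw [map_mul, ← iterateFrobeniusEquiv_def K p e x, RingEquiv.symm_apply_apply]
    exact this
  obtain ⟨m, hm⟩ := MvPolynomial.ne_zero_iff.1 hf0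
  let a : Fin n →₀ ℕ := Finsupp.equivFunOnFinite.symm fun i => m i % p ^ e
  let b : Fin n →₀ ℕ := Finsupp.equivFunOnFinite.symm fun i => m i / p ^ e
  have ha : ∀ i, a i < p ^ e := fun i => by simpa [a] using Nat.mod_lt (m i) hq
  refine ⟨cart (p ^ e) hq r a f, ?_, fun s => cart_vanAt hn p e hq r hr a ha (w s) t f (hf s),
    cart_totalDegree _ _ _ _ _⟩
  refine MvPolynomial.ne_zero_iff.2 ⟨b, ?_⟩
  rw [coeff_cart]
  have : p ^ e • b + a = m := by
    ext i
    simp [a, b, Nat.div_add_mod]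
  rw [this]
  intro h
  exact hm ((iterateFrobeniusEquiv K p e).symm.map_eq_zero_iff.1 h)

end charp

section reduction
open MvPolynomial

variable {n : ℕ}

/-- Evaluation matrix. -/
noncomputable def evM {R : Type*} [CommRing R] {ι : Type*} (w : ι → Fin n → R)
    (A B : Finset (Fin n →₀ ℕ)) : Matrix (ι × A) B R :=
  fun x m => coeff x.2.1 (trl (w x.1) (monomial m.1 1))

noncomputable def degSet (n d : ℕ) : Finset (Fin n →₀ ℕ) :=
  (Finsupp.finite_of_degree_le (σ := Fin n) d).toFinset

lemma mem_degSet {d : ℕ} {m : Fin n →₀ ℕ} : m ∈ degSet n d ↔ m.degree ≤ d := by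
  simp [degSet]

lemma evM_mulVec {R : Type*} [CommRing R] {ι : Type*} (w : ι → Fin n → R)
    (A B : Finset (Fin n →₀ ℕ)) (v : B → R) (x : ι × A) :
    (evM w A B).mulVec v x = coeff x.2.1 (trl (w x.1) (∑ m : B, monomial m.1 (v m))) := by
  rw [map_sum, coeff_sum]
  simp only [Matrix.mulVec, dotProduct, evM]
  refine Finset.sum_congr rfl fun m _ => ?_
  rw [show monomial m.1 (v m) = v m • monomial m.1 (1 : R) by rw [smul_monomial]; simp,
    map_smul, coeff_smul, smul_eq_mul, mul_comm]

lemma evM_map {R R' : Type*} [CommRing R] [CommRing R'] (φ : R →+* R') {ι : Type*}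
    (w : ι → Fin n → R) (A B : Finset (Fin n →₀ ℕ)) :
    (evM w A B).map φ = evM (fun s i => φ (w s i)) A B := by
  ext x m
  simp only [Matrix.map_apply, evM]
  rw [show monomial m.1 (1 : R') = map φ (monomial m.1 (1 : R)) by simp,
    trl_map φ (w x.1), coeff_map]

lemma sum_degSet {R : Type*} [CommRing R] {d : ℕ} (f : MvPolynomial (Fin n) R)
    (hf : f.totalDegree ≤ d) :
    f = ∑ m : degSet n d, monomial m.1 (coeff m.1 f) := by
  classical
  rw [Finset.sum_coe_sort (degSet n d) (fun m => monomial m (coeff m f))]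
  conv_lhs => rw [f.as_sum]
  refine Finset.sum_subset (fun m hm => ?_) (fun m _ hm => ?_)
  · exact mem_degSet.2 ((degree_le_td (mem_support_iff.1 hm)).trans hf)
  · rw [notMem_support_iff.1 hm, map_zero]

lemma exists_leftInv {ι : Type*} [Fintype ι] [DecidableEq ι] (w : ι → Fin n → ℂ) (t d : ℕ)
    (h : ∀ f : MvPolynomial (Fin n) ℂ, f.totalDegree ≤ d → (∀ s, VanAt (w s) (t + 1) f) → f = 0) :
    ∃ L : Matrix (degSet n d) (ι × degSet n t) ℂ, L * evM w (degSet n t) (degSet n d) = 1 := by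
  classical
  have hinj : LinearMap.ker (Matrix.toLin' (evM w (degSet n t) (degSet n d))) = ⊥ := by
    rw [LinearMap.ker_eq_bot']
    intro v hv
    have h0 : (∑ m : degSet n d, monomial m.1 (v m)) = 0 := by
      apply h
      · refine (totalDegree_finsetSum _ _).trans (Finset.sup_le fun m _ => ?_)
        refine (totalDegree_monomial_le _ _).trans ?_
        exact mem_degSet.1 m.2
      · intro s k hk
        have := congrFun hv (s, ⟨k, mem_degSet.2 (Nat.le_of_lt_succ hk)⟩)
        rw [Matrix.toLin'_apply, evM_mulVec] at this
        exact this
    funext m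
    have := congrArg (coeff m.1) h0
    rw [coeff_sum] at this
    simpa [coeff_monomial, Subtype.ext_iff, Finset.sum_ite_eq', ← Subtype.ext_iff] using this
  obtain ⟨g, hg⟩ := LinearMap.exists_leftInverse_of_injective _ hinj
  refine ⟨LinearMap.toMatrix' g, ?_⟩
  have := congrArg LinearMap.toMatrix' hg
  rwa [LinearMap.toMatrix'_comp, LinearMap.toMatrix'_toLin', LinearMap.toMatrix'_id] at this

lemma eq_zero_of_leftInv {R : Type*} [CommRing R] {ι : Type*} [Fintype ι] [DecidableEq ι]
    (w : ι → Fin n → R) (t d : ℕ)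
    (L : Matrix (degSet n d) (ι × degSet n t) R) (hL : L * evM w (degSet n t) (degSet n d) = 1)
    (f : MvPolynomial (Fin n) R) (hd : f.totalDegree ≤ d) (hf : ∀ s, VanAt (w s) (t + 1) f) :
    f = 0 := by
  have h1 : (evM w (degSet n t) (degSet n d)).mulVec (fun m => coeff m.1 f) = 0 := by
    funext x
    rw [evM_mulVec, ← sum_degSet f hd]
    exact hf x.1 _ (Nat.lt_succ_of_le (mem_degSet.1 x.2.2))
  have h2 : (fun m : degSet n d => coeff m.1 f) = 0 := by
    rw [← Matrix.one_mulVec (fun m : degSet n d => coeff m.1 f), ← hL, ← Matrix.mulVec_mulVec, h1,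
      Matrix.mulVec_zero]
  rw [sum_degSet f hd]
  refine Finset.sum_eq_zero fun m _ => ?_
  have := congrFun h2 m
  simp only [Pi.zero_apply] at this
  rw [this, map_zero]

lemma jacobsonInt : IsJacobsonRing ℤ := by
  rw [isJacobsonRing_iff_prime_eq]
  intro P hP
  by_cases h : P = ⊥
  · subst h
    rw [eq_bot_iff]
    intro x hx
    rw [Ideal.mem_jacobson_bot] at hx
    have h1 := hx (3 * x)
    rw [Int.isUnit_iff] at h1
    rw [Ideal.mem_bot]
    have h2 : x * x = 0 := by
      rcases h1 with h1 | h1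
      · linarith
      · nlinarith [mul_self_nonneg x]
    exact mul_self_eq_zero.1 h2
  · have : P.IsMaximal := hP.isMaximal h
    exact Ideal.jacobson_eq_self_of_isMaximal

/-- A finite set of complex numbers lies in a valuation ring of positive residue characteristic. -/
lemma exists_valuation (s : Set ℂ) (hs : s.Finite) :
    ∃ V : ValuationSubring ℂ, s ⊆ V ∧ ∃ p : ℕ, p.Prime ∧ (p : ℂ) ∈ V.nonunits := by
  let A := Algebra.adjoin ℤ s
  have hft : Algebra.FiniteType ℤ A :=
    (Subalgebra.fg_iff_finiteType _).1 ⟨hs.toFinset, by simp [A]⟩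
  obtain ⟨M, hM⟩ := Ideal.exists_maximal A
  let := Ideal.Quotient.field M
  have hft2 : Algebra.FiniteType ℤ (A ⧸ M) := inferInstance
  have := jacobsonInt
  have hfin := finite_of_finite_type_of_isJacobsonRing ℤ (A ⧸ M)
  have hp : ∃ p : ℕ, p.Prime ∧ (p : A ⧸ M) = 0 := by
    obtain ⟨p, hc⟩ := CharP.exists (A ⧸ M)
    rcases CharP.char_is_prime_or_zero (A ⧸ M) p with h | h
    · exact ⟨p, h, CharP.cast_eq_zero _ _⟩
    · exfalso
      subst h
      have : CharZero (A ⧸ M) := CharP.charP_to_charZero _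
      have hint : Algebra.IsIntegral ℤ (A ⧸ M) := inferInstance
      exact Int.not_isField (isField_of_isIntegral_of_isField
        (algebraMap ℤ (A ⧸ M)).injective_int (Field.toIsField _))
  obtain ⟨p, hp, hp0⟩ := hp
  obtain ⟨V, hV, hV2⟩ := Ideal.image_subset_nonunits_valuationSubring (A := A.toSubring) M hM.ne_top
  refine ⟨V, fun x hx => hV (Algebra.subset_adjoin hx), p, hp, hV2 ⟨(p : A), ?_, by simp⟩⟩
  have : Ideal.Quotient.mk M (p : A) = 0 := by simpa using hp0
  exact Ideal.Quotient.eq_zero_iff_mem.1 this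

lemma exists_primitive (V : ValuationSubring ℂ) (f : MvPolynomial (Fin n) ℂ) (hf : f ≠ 0) :
    ∃ (c : ℂ) (g : MvPolynomial (Fin n) V) (m : Fin n →₀ ℕ), c ≠ 0 ∧
      map V.subtype g = C c * f ∧ coeff m g = 1 := by
  obtain ⟨m, hm, hmax⟩ := Finset.exists_max_image f.support (fun m => V.valuation (coeff m f))
    (support_nonempty.2 hf)
  have hc : coeff m f ≠ 0 := mem_support_iff.1 hm
  have hmem : C (coeff m f)⁻¹ * f ∈ Set.range (map (σ := Fin n) V.subtype) := by
    rw [mem_range_map_iff_coeffs_subset]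
    intro x hx
    obtain ⟨k, hk, rfl⟩ := mem_coeffs_iff.1 (Finset.mem_coe.1 hx)
    refine ⟨⟨coeff k (C (coeff m f)⁻¹ * f), ?_⟩, rfl⟩
    rw [coeff_C_mul, ← V.valuation_le_one_iff, map_mul, map_inv₀]
    have h0 : V.valuation (coeff m f) ≠ 0 := (map_ne_zero _).2 hc
    by_cases hk0 : coeff k f = 0
    · simp [hk0]
    · rw [inv_mul_le_one₀ (zero_lt_iff.2 h0)]
      exact hmax k (mem_support_iff.2 hk0)
  obtain ⟨g, hg⟩ := hmem
  refine ⟨_, g, m, inv_ne_zero hc, hg, ?_⟩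
  have := congrArg (coeff m) hg
  rw [coeff_map, coeff_C_mul, inv_mul_cancel₀ hc] at this
  exact Subtype.ext this

lemma key (hn : 1 ≤ n) {ι : Type*} [Fintype ι] (w : ι → Fin n → ℂ) (t d : ℕ)
    (h : ∀ f : MvPolynomial (Fin n) ℂ, f.totalDegree ≤ d → (∀ s, VanAt (w s) (t + 1) f) → f = 0) :
    ∃ p : ℕ, p.Prime ∧ ∀ e : ℕ, ∀ f : MvPolynomial (Fin n) ℂ, f ≠ 0 →
      (∀ s, VanAt (w s) ((t + 1 + n - 1) * p ^ e) f) → p ^ e * (d + 1) ≤ f.totalDegree := by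
  classical
  obtain ⟨L, hL⟩ := exists_leftInv w t d h
  obtain ⟨V, hV, p, hp, hpV⟩ := exists_valuation
    (Set.range (fun x : ι × Fin n => w x.1 x.2) ∪
      Set.range (fun x : (degSet n d) × (ι × degSet n t) => L x.1 x.2))
    ((Set.finite_range _).union (Set.finite_range _))
  refine ⟨p, hp, fun e f hf0 hf => ?_⟩
  let K := AlgebraicClosure (IsLocalRing.ResidueField V)
  let φ : V →+* K := (algebraMap (IsLocalRing.ResidueField V) K).comp (IsLocalRing.residue V)
  have hφp : φ (p : V) = 0 := by
    have : (p : V) ∈ IsLocalRing.maximalIdeal V := by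
      obtain ⟨h1, h2⟩ := ValuationSubring.mem_nonunits_iff_exists_mem_maximalIdeal.1 hpV
      exact h2
    have h2 : IsLocalRing.residue V (p : V) = 0 := (IsLocalRing.residue_eq_zero_iff _).2 this
    simp only [φ, RingHom.comp_apply, h2, map_zero]
  have : Fact p.Prime := ⟨hp⟩
  have hchar : CharP K p := by
    rw [map_natCast] at hφp
    exact (CharP.charP_iff_prime_eq_zero hp).2 hφp
  have : ExpChar K p := ExpChar.prime hp
  let w' : ι → Fin n → V := fun s i => ⟨w s i, hV (Or.inl ⟨(s, i), rfl⟩)⟩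
  let L' : Matrix (degSet n d) (ι × degSet n t) V := fun a b => ⟨L a b, hV (Or.inr ⟨(a, b), rfl⟩)⟩
  have hL' : L' * evM w' (degSet n t) (degSet n d) = 1 := by
    have hinj : Function.Injective (V.subtype : V →+* ℂ) := Subtype.val_injective
    apply Matrix.map_injective hinj
    show (L' * evM w' (degSet n t) (degSet n d)).map V.subtype = (1 : Matrix _ _ V).map V.subtype
    rw [Matrix.map_mul, evM_map, Matrix.map_one _ (map_zero _) (map_one _)]
    exact hL
  have hLK : L'.map φ * evM (fun s i => φ (w' s i)) (degSet n t) (degSet n d) = 1 := by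
    rw [← evM_map, ← Matrix.map_mul, hL', Matrix.map_one _ (map_zero _) (map_one _)]
  obtain ⟨c, g, m, hc, hg, hm⟩ := exists_primitive V f hf0
  have hgV : ∀ s, VanAt (w' s) ((t + 1 + n - 1) * p ^ e) g := by
    intro s k hk
    have h1 := hf s k hk
    have h2 : map V.subtype (trl (w' s) g) = C c * trl (w s) f := by
      rw [← trl_map, hg, map_mul]
      congr 1
      simp [trl]
    have h3 := congrArg (coeff k) h2
    rw [coeff_map, coeff_C_mul, h1, mul_zero] at h3
    exact Subtype.ext h3
  obtain ⟨u, hu0, hu, hud⟩ := charp_main hn p e (fun s i => φ (w' s i)) (t + 1) (map φ g)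
    (MvPolynomial.ne_zero_iff.2 ⟨m, by rw [coeff_map, hm, map_one]; exact one_ne_zero⟩)
    (fun s k hk => by
      rw [trl_map, coeff_map, hgV s k hk, map_zero])
  have hdu : d + 1 ≤ u.totalDegree := by
    by_contra hc
    exact hu0 (eq_zero_of_leftInv _ t d _ hLK u (by omega) hu)
  have hdeg : (map φ g).totalDegree ≤ f.totalDegree := by
    refine td_le fun k hk => ?_
    apply degree_le_td
    intro h0
    have h3 := congrArg (coeff k) hg
    rw [coeff_map, coeff_C_mul, h0, mul_zero] at h3
    have h4 : coeff k g = 0 := Subtype.ext h3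
    exact hk (by rw [coeff_map, h4, map_zero])
  exact (Nat.mul_le_mul_left _ hdu).trans (hud.trans hdeg)

end reduction

section final
open MvPolynomial

lemma omega_le {n : ℕ} {S : Set (Fin n → ℂ)} {t : ℕ} (P : MvPolynomial (Fin n) ℂ) (h0 : P ≠ 0)
    (h : ∀ w ∈ S, VanAt w t P) : omegaT n S t ≤ P.totalDegree :=
  Nat.sInf_le ⟨P, h0, rfl, fun w hw => (hasZero_iff w t P).2 (h w hw)⟩

lemma exists_vanishing {n : ℕ} (hn : 1 ≤ n) {S : Set (Fin n → ℂ)} (hS : S.Finite) (t : ℕ) :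
    ∃ P : MvPolynomial (Fin n) ℂ, P ≠ 0 ∧ ∀ w ∈ S, VanAt w t P := by
  classical
  let i0 : Fin n := ⟨0, hn⟩
  refine ⟨∏ w ∈ hS.toFinset, (X i0 - C (w i0)) ^ t, ?_, fun w hw => ?_⟩
  · refine Finset.prod_ne_zero_iff.2 fun w _ => pow_ne_zero _ fun h => ?_
    have := congrArg (eval (fun _ => w i0 + 1)) h
    simp at this
  · rw [← Finset.mul_prod_erase _ _ (hS.mem_toFinset.2 hw)]
    rw [← add_zero t]
    refine VanAt.mul ?_ (lowV_zero _)
    intro m hm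
    have : trl w ((X i0 - C (w i0)) ^ (t + 0)) = monomial (Finsupp.single i0 t) 1 := by
      rw [← X_pow_eq_monomial]
      simp [trl]
    rw [this, coeff_monomial, if_neg]
    rintro rfl
    simp at hm

lemma omega_spec {n : ℕ} (hn : 1 ≤ n) {S : Set (Fin n → ℂ)} (hS : S.Finite) (t : ℕ) :
    ∃ P : MvPolynomial (Fin n) ℂ, P ≠ 0 ∧ P.totalDegree = omegaT n S t ∧ ∀ w ∈ S, VanAt w t P := by
  obtain ⟨P, h0, h⟩ := exists_vanishing hn hS t
  obtain ⟨Q, hQ0, hQd, hQ⟩ := Nat.sInf_mem (s := {D : ℕ | ∃ P : MvPolynomial (Fin n) ℂ,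
    P ≠ 0 ∧ P.totalDegree = D ∧ ∀ w ∈ S, HasZeroOfMult n (fun z => MvPolynomial.eval z P) w t})
    ⟨_, P, h0, rfl, fun w hw => (hasZero_iff w t P).2 (h w hw)⟩
  exact ⟨Q, hQ0, hQd, fun w hw => (hasZero_iff w t Q).1 (hQ w hw)⟩

lemma omega_zero {n : ℕ} {S : Set (Fin n → ℂ)} : omegaT n S 0 = 0 := by
  have := omega_le (S := S) (t := 0) 1 one_ne_zero (fun w _ => lowV_zero _)
  simpa using this

lemma omega_subadd {n : ℕ} (hn : 1 ≤ n) {S : Set (Fin n → ℂ)} (hS : S.Finite) (s t : ℕ) :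
    omegaT n S (s + t) ≤ omegaT n S s + omegaT n S t := by
  obtain ⟨P, hP0, hPd, hP⟩ := omega_spec hn hS s
  obtain ⟨Q, hQ0, hQd, hQ⟩ := omega_spec hn hS t
  rw [← hPd, ← hQd]
  exact (omega_le (P * Q) (mul_ne_zero hP0 hQ0) fun w hw => (hP w hw).mul (hQ w hw)).trans
    (totalDegree_mul _ _)

lemma omega_key {n : ℕ} (hn : 1 ≤ n) {S : Set (Fin n → ℂ)} (hS : S.Finite) (t : ℕ) (ht : 1 ≤ t) :
    ∃ p : ℕ, p.Prime ∧ ∀ e : ℕ, p ^ e * omegaT n S t ≤ omegaT n S ((t + n - 1) * p ^ e) := by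
  by_cases h0 : omegaT n S t = 0
  · exact ⟨2, Nat.prime_two, fun e => by simp [h0]⟩
  obtain ⟨d, hd⟩ := Nat.exists_eq_succ_of_ne_zero h0
  obtain ⟨t, rfl⟩ : ∃ t', t = t' + 1 := ⟨t - 1, by omega⟩
  have := hS.fintype
  obtain ⟨p, hp, h⟩ := key hn (fun s : S => s.1) t d (fun f hf hv => by
    by_contra hf0
    have := omega_le f hf0 (fun w hw => hv ⟨w, hw⟩)
    omega)
  refine ⟨p, hp, fun e => ?_⟩
  obtain ⟨P, hP0, hPd, hP⟩ := omega_spec hn hS ((t + 1 + n - 1) * p ^ e)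
  rw [← hPd, hd]
  exact h e P hP0 fun s => hP s.1 s.2

end final

/-- The sequence `ω_t(S)/t` converges to a limit `Ω(S)` satisfying
`ω_t(S)/(t+n-1) ≤ Ω(S) ≤ ω_t(S)/t ≤ ω₁(S)` for all `t ≥ 1`. -/
theorem omega_limit_exists
    (n : ℕ) (hn : 1 ≤ n) (S : Set (Fin n → ℂ)) (hS : S.Finite) (hne : S.Nonempty) :
    ∃ Ω : ℝ,
      Filter.Tendsto (fun t : ℕ => (omegaT n S t : ℝ) / t) Filter.atTop (nhds Ω) ∧
      ∀ t : ℕ, 1 ≤ t →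
        (omegaT n S t : ℝ) / ((t : ℝ) + (n : ℝ) - 1) ≤ Ω ∧
        Ω ≤ (omegaT n S t : ℝ) / t ∧
        (omegaT n S t : ℝ) / t ≤ (omegaT n S 1 : ℝ) := by
  have hsub : Subadditive (fun t => (omegaT n S t : ℝ)) := fun s t => by
    beta_reduce
    exact_mod_cast omega_subadd hn hS s t
  have hbdd : BddBelow (Set.range fun t : ℕ => (omegaT n S t : ℝ) / t) :=
    ⟨0, by rintro _ ⟨t, rfl⟩; positivity⟩
  refine ⟨hsub.lim, hsub.tendsto_lim hbdd, fun t ht => ⟨?_, hsub.lim_le_div hbdd (by omega), ?_⟩⟩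
  · have hpos : (0 : ℝ) < (t : ℝ) + n - 1 := by
      have h1 : (1 : ℝ) ≤ t := by exact_mod_cast ht
      have h2 : (1 : ℝ) ≤ n := by exact_mod_cast hn
      linarith
    obtain ⟨p, hp, h⟩ := omega_key hn hS t ht
    have hT : Filter.Tendsto (fun e : ℕ => (t + n - 1) * p ^ e) Filter.atTop Filter.atTop := by
      apply Filter.tendsto_atTop_mono (f := fun e => e) _ Filter.tendsto_id
      intro e
      have h1 : e < p ^ e := Nat.lt_pow_self hp.one_lt
      have h2 : 1 ≤ t + n - 1 := by omega
      nlinarith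
    refine ge_of_tendsto' ((hsub.tendsto_lim hbdd).comp hT) fun e => ?_
    have hpe : (0 : ℝ) < (p : ℝ) ^ e := by
      have : (0 : ℝ) < p := by exact_mod_cast hp.pos
      positivity
    have hc : (((t + n - 1 : ℕ)) : ℝ) = (t : ℝ) + n - 1 := by
      rw [Nat.cast_sub (by omega)]; push_cast; ring
    have h3 : ((p : ℝ) ^ e) * omegaT n S t ≤ omegaT n S ((t + n - 1) * p ^ e) := by
      exact_mod_cast h e
    simp only [Function.comp]
    rw [Nat.cast_mul, hc, Nat.cast_pow, div_le_div_iff₀ hpos (by positivity)]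
    nlinarith
  · have h1 : omegaT n S t ≤ t * omegaT n S 1 := by
      clear ht
      induction t with
      | zero => simp [omega_zero]
      | succ t ih =>
        have := omega_subadd hn hS t 1
        rw [add_mul, one_mul]
        omega
    rw [div_le_iff₀ (by exact_mod_cast ht), mul_comm]
    exact_mod_cast h1
end

section
/- Let d and ℓ be positive integers with dℓ > d + ℓ. Let x_1, …, x_d be complex numbers that are linearly independent over ℚ and let y_1, …, y_ℓ be complex numbers that are linearly independent over ℚ. Then at least one of the dℓ numbers e^{x_i y_j} (1 ≤ i ≤ d, 1 ≤ j ≤ ℓ) is transcendental. -/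
open NumberField Finset

theorem siegel_aux (K : Type) [Field K] [NumberField K] :
    ∃ c : ℝ, 1 ≤ c ∧ ∀ (α β : Type) [Fintype α] [Fintype β] (a : Matrix α β (𝓞 K)) (A : ℝ),
      1 ≤ A → 0 < Fintype.card α → 2 * Fintype.card α ≤ Fintype.card β →
      (∀ k l, house ((algebraMap (𝓞 K) K) (a k l)) ≤ A) →
      ∃ ξ : β → 𝓞 K, ξ ≠ 0 ∧ a.mulVec ξ = 0 ∧
        ∀ l, house ((algebraMap (𝓞 K) K) (ξ l)) ≤ c * (c * Fintype.card β * A) := by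
  classical
  have key : ∃ c : ℝ, ∀ (α β : Type) [Fintype α] [Fintype β] (a : Matrix α β (𝓞 K)) (A : ℝ),
      a ≠ 0 → 0 < Fintype.card α → Fintype.card α < Fintype.card β →
      (∀ k l, house ((algebraMap (𝓞 K) K) (a k l)) ≤ A) →
      ∃ ξ : β → 𝓞 K, ξ ≠ 0 ∧ a.mulVec ξ = 0 ∧
        ∀ l, house ((algebraMap (𝓞 K) K) (ξ l)) ≤ c * ((c * Fintype.card β * A) ^
          ((Fintype.card α : ℝ) / (Fintype.card β - Fintype.card α))) := by
    apply Exists.intro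
    intro α β _ _ a A ha hp hpq habs
    exact house.exists_ne_zero_int_vec_house_le K a ha hp hpq rfl habs rfl
  obtain ⟨c, hc⟩ := key
  refine ⟨max 1 |c|, le_max_left _ _, ?_⟩
  intro α β _ _ a A hA hp hpq habs
  have hq : (1:ℝ) ≤ Fintype.card β := by
    have : 1 ≤ Fintype.card β := by omega
    exact_mod_cast this
  have hC1 : (1:ℝ) ≤ max 1 |c| := le_max_left _ _
  have hbase : 1 ≤ max 1 |c| * Fintype.card β * A :=
    one_le_mul_of_one_le_of_one_le (one_le_mul_of_one_le_of_one_le hC1 hq) hA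
  by_cases ha : a = 0
  · subst ha
    have : Nonempty β := Fintype.card_pos_iff.1 (by omega)
    refine ⟨1, one_ne_zero, by simp, fun l => ?_⟩
    have : house ((algebraMap (𝓞 K) K) ((1 : β → 𝓞 K) l)) = 1 := by
      have := house_intCast (K := K) 1
      simpa using this
    rw [this]
    exact one_le_mul_of_one_le_of_one_le hC1 hbase
  · obtain ⟨ξ, h0, h1, h2⟩ := hc α β a A ha hp (by omega) habs
    refine ⟨ξ, h0, h1, fun l => (h2 l).trans ?_⟩
    have hpq' : (2:ℝ) * Fintype.card α ≤ Fintype.card β := by exact_mod_cast hpq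
    have hp' : (0:ℝ) < Fintype.card α := by exact_mod_cast hp
    have he1 : (Fintype.card α : ℝ) / (Fintype.card β - Fintype.card α) ≤ 1 := by
      rw [div_le_one (by linarith)]; linarith
    have he0 : 0 ≤ (Fintype.card α : ℝ) / (Fintype.card β - Fintype.card α) :=
      div_nonneg hp'.le (by linarith)
    have hcc : |c| ≤ max 1 |c| := le_max_right _ _
    calc _ ≤ |c * ((c * Fintype.card β * A) ^
          ((Fintype.card α : ℝ) / (Fintype.card β - Fintype.card α)))| := le_abs_self _
      _ = |c| * |(c * Fintype.card β * A) ^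
          ((Fintype.card α : ℝ) / (Fintype.card β - Fintype.card α))| := abs_mul _ _
      _ ≤ |c| * |c * Fintype.card β * A| ^
          ((Fintype.card α : ℝ) / (Fintype.card β - Fintype.card α)) := by
          gcongr; exact Real.abs_rpow_le_abs_rpow _ _
      _ ≤ max 1 |c| * (max 1 |c| * Fintype.card β * A) ^
          ((Fintype.card α : ℝ) / (Fintype.card β - Fintype.card α)) := by
          rw [abs_mul, abs_mul, Nat.abs_cast, abs_of_nonneg (by linarith : 0 ≤ A)]
          gcongr
      _ ≤ max 1 |c| * (max 1 |c| * Fintype.card β * A) ^ (1:ℝ) := by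
          gcongr
      _ = _ := by rw [Real.rpow_one]

theorem factor_aux (S : Finset ℂ) : ∀ f : ℂ → ℂ, Differentiable ℂ f → (∀ s ∈ S, f s = 0) →
    ∃ g : ℂ → ℂ, Differentiable ℂ g ∧ ∀ z, f z = (∏ s ∈ S, (z - s)) * g z := by
  classical
  induction S using Finset.induction_on with
  | empty => intro f hf _; exact ⟨f, hf, by simp⟩
  | insert a S ha ih =>
    intro f hf h0
    have hfa : f a = 0 := h0 a (mem_insert_self _ _)
    have hd : Differentiable ℂ (dslope f a) := by
      rw [← differentiableOn_univ]
      exact (Complex.differentiableOn_dslope Filter.univ_mem).2 hf.differentiableOn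
    have hfd : ∀ z, f z = (z - a) * dslope f a z := by
      intro z
      have := sub_smul_dslope f a z
      rw [smul_eq_mul, hfa, sub_zero] at this
      exact this.symm
    obtain ⟨g, hg, hgz⟩ := ih (dslope f a) hd (by
      intro s hs
      have h1 := h0 s (mem_insert_of_mem hs)
      rw [hfd s] at h1
      rcases mul_eq_zero.1 h1 with h | h
      · exact absurd (sub_eq_zero.1 h ▸ hs) ha
      · exact h)
    refine ⟨g, hg, fun z => ?_⟩
    rw [prod_insert ha, hfd z, hgz z, mul_assoc]

theorem schwarz_aux (S : Finset ℂ) (f : ℂ → ℂ) (hf : Differentiable ℂ f) (h0 : ∀ s ∈ S, f s = 0)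
    (r B : ℝ) (hr : 0 < r) (hS : ∀ s ∈ S, ‖s‖ ≤ r) (hB : ∀ w, ‖w‖ = 5 * r → ‖f w‖ ≤ B)
    (z : ℂ) (hz : ‖z‖ ≤ r) : ‖f z‖ * 2 ^ S.card ≤ B := by
  obtain ⟨g, hg, hgz⟩ := factor_aux S f hf h0
  have hgB : ‖g z‖ ≤ B / (4 * r) ^ S.card := by
    refine Complex.norm_le_of_forall_mem_frontier_norm_le (U := Metric.ball 0 (5 * r))
      Metric.isBounded_ball hg.diffContOnCl ?_ (subset_closure ?_)
    · intro w hw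
      rw [frontier_ball _ (by positivity)] at hw
      have hw : ‖w‖ = 5 * r := by simpa using hw
      rw [le_div_iff₀ (by positivity)]
      refine le_trans ?_ (hB w hw)
      rw [hgz w, norm_mul, mul_comm, norm_prod]
      gcongr
      rw [← prod_const]
      apply prod_le_prod
      · intros; positivity
      · intro s hs
        have := norm_sub_norm_le w s
        have := hS s hs
        linarith
    · simp; linarith
  have hprod : ‖∏ s ∈ S, (z - s)‖ ≤ (2 * r) ^ S.card := by
    rw [norm_prod, ← prod_const]
    apply prod_le_prod
    · intros; positivity
    · intro s hs
      have := norm_sub_le z s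
      have := hS s hs
      linarith
  rw [le_div_iff₀ (by positivity)] at hgB
  rw [hgz z, norm_mul]
  calc _ ≤ (2 * r) ^ S.card * ‖g z‖ * 2 ^ S.card := by gcongr
    _ = ‖g z‖ * (4 * r) ^ S.card := by
      rw [show 4 * r = 2 * r * 2 by ring, mul_pow (2 * r) 2]; ring
    _ ≤ B := hgB

theorem liouville_aux (K : Type) [Field K] [NumberField K] (σ : K →+* ℂ) (ξ : 𝓞 K) (hξ : ξ ≠ 0)
    (H : ℝ) (hH : 1 ≤ H) (hξH : house (algebraMap (𝓞 K) K ξ) ≤ H) :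
    1 ≤ ‖σ (algebraMap (𝓞 K) K ξ)‖ * H ^ (Module.finrank ℚ K) := by
  have h1 := norm_norm_le_norm_mul_house_pow (algebraMap (𝓞 K) K ξ) σ
  have h2 : (1:ℝ) ≤ ‖Algebra.norm ℚ (algebraMap (𝓞 K) K ξ)‖ := by
    have h3 : Algebra.norm ℤ ξ ≠ 0 := Algebra.norm_ne_zero_iff.2 hξ
    have h4 := Algebra.coe_norm_int ξ
    have h5 : (1:ℤ) ≤ |Algebra.norm ℤ ξ| := Int.one_le_abs h3
    change (1:ℝ) ≤ ‖Algebra.norm ℚ (ξ : K)‖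
    rw [← h4, ← Rat.norm_cast_real, Real.norm_eq_abs]
    exact_mod_cast h5
  refine h2.trans (h1.trans ?_)
  gcongr
  calc _ ≤ H ^ (Module.finrank ℚ K - 1) := by
        gcongr; exact house_nonneg _
    _ ≤ _ := pow_le_pow_right₀ hH (Nat.sub_le _ _)

noncomputable def EF {d L : ℕ} (x : Fin d → ℂ) (p : (Fin d → Fin L) → ℂ) (z : ℂ) : ℂ :=
  ∑ l : Fin d → Fin L, p l * Complex.exp ((∑ i, ((l i : ℕ) : ℂ) * x i) * z)

theorem EF_diff {d L : ℕ} (x : Fin d → ℂ) (p : (Fin d → Fin L) → ℂ) :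
    Differentiable ℂ (EF x p) := by
  unfold EF
  fun_prop

theorem norm_comb_le {d : ℕ} (x : Fin d → ℂ) (n : Fin d → ℕ) (M : ℕ) (h : ∀ i, n i ≤ M) :
    ‖∑ i, (n i : ℂ) * x i‖ ≤ M * ∑ i, ‖x i‖ := by
  rw [mul_sum]
  refine norm_sum_le_of_le _ fun i _ => ?_
  rw [norm_mul, Complex.norm_natCast]
  have : (n i : ℝ) ≤ M := by exact_mod_cast h i
  gcongr

theorem EF_growth {d L : ℕ} (x : Fin d → ℂ) (p : (Fin d → Fin L) → ℂ) (P : ℝ)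
    (hP : ∀ l, ‖p l‖ ≤ P) (hP0 : 0 ≤ P) (z : ℂ) :
    ‖EF x p z‖ ≤ (L:ℝ) ^ d * (P * Real.exp (L * (∑ i, ‖x i‖) * ‖z‖)) := by
  unfold EF
  have : ((L:ℝ) ^ d) = ∑ l : Fin d → Fin L, (1:ℝ) := by simp
  rw [this, sum_mul]
  refine norm_sum_le_of_le _ fun l _ => ?_
  rw [one_mul, norm_mul]
  gcongr
  · exact hP l
  · refine (Complex.norm_exp_le_exp_norm _).trans ?_
    rw [norm_mul]
    gcongr
    exact norm_comb_le x (fun i => l i) L (fun i => (l i).2.le)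

theorem comb_inj {d : ℕ} (x : Fin d → ℂ) (hx : LinearIndependent ℚ x) (m n : Fin d → ℕ)
    (h : ∑ i, (m i : ℂ) * x i = ∑ i, (n i : ℂ) * x i) : m = n := by
  rw [Fintype.linearIndependent_iff] at hx
  funext i
  have := hx (fun i => (m i : ℚ) - n i) (by
    rw [← sub_eq_zero, ← sum_sub_distrib] at h
    rw [← h]
    refine sum_congr rfl fun i _ => ?_
    rw [Rat.smul_def]
    push_cast; ring) i
  have h2 : (m i : ℚ) = n i := by linarith
  exact_mod_cast h2

theorem EF_schwarz {d L ℓ : ℕ} (hl : 0 < ℓ) (x : Fin d → ℂ) (p : (Fin d → Fin L) → ℂ) (P : ℝ)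
    (hP : ∀ l, ‖p l‖ ≤ P) (hP0 : 0 ≤ P) (y : Fin ℓ → ℂ) (hy : LinearIndependent ℚ y)
    (M : ℕ) (hM : 0 < M) (h0 : ∀ m : Fin ℓ → ℕ, (∀ j, m j < M) → EF x p (∑ j, (m j : ℂ) * y j) = 0)
    (z : ℂ) (hz : ‖z‖ ≤ M * ∑ j, ‖y j‖) :
    ‖EF x p z‖ * 2 ^ (M ^ ℓ) ≤
      (L:ℝ) ^ d * (P * Real.exp (5 * (∑ i, ‖x i‖) * (∑ j, ‖y j‖)) ^ (L * M)) := by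
  classical
  let pt : (Fin ℓ → Fin M) → ℂ := fun m => ∑ j, ((m j : ℕ) : ℂ) * y j
  have hinj : Function.Injective pt := by
    intro m n hmn
    have := comb_inj y hy (fun j => m j) (fun j => n j) hmn
    funext j
    exact Fin.ext (congrFun this j)
  have hcard : (univ.image pt).card = M ^ ℓ := by
    rw [card_image_of_injective _ hinj]; simp
  have hY : 0 < ∑ j, ‖y j‖ := by
    refine sum_pos (fun j _ => norm_pos_iff.2 (hy.ne_zero j)) ⟨⟨0, hl⟩, mem_univ _⟩
  have hM' : (0:ℝ) < M := by exact_mod_cast hM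
  rw [← hcard]
  refine schwarz_aux (univ.image pt) (EF x p) (EF_diff x p) ?_ (M * ∑ j, ‖y j‖) _
    (by positivity) ?_ ?_ z hz
  · intro s hs
    obtain ⟨m, _, rfl⟩ := mem_image.1 hs
    exact h0 (fun j => m j) (fun j => (m j).2)
  · intro s hs
    obtain ⟨m, _, rfl⟩ := mem_image.1 hs
    exact norm_comb_le y (fun j => m j) M (fun j => (m j).2.le)
  · intro w hw
    refine (EF_growth x p P hP hP0 w).trans (le_of_eq ?_)
    rw [hw, ← Real.exp_nat_mul]
    congr 3
    push_cast; ring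

theorem EF_indep {d L : ℕ} (x : Fin d → ℂ) (hx : LinearIndependent ℚ x)
    (p : (Fin d → Fin L) → ℂ) (h : ∀ z, EF x p z = 0) : p = 0 := by
  let χ : (Fin d → Fin L) → (Multiplicative ℂ →* ℂ) := fun l =>
    { toFun := fun z => Complex.exp ((∑ i, ((l i : ℕ) : ℂ) * x i) * z.toAdd)
      map_one' := by simp
      map_mul' := by intro a b; simp [mul_add, Complex.exp_add] }
  have hinj : Function.Injective χ := by
    intro l m hlm
    have h1 : ∀ z : ℂ, Complex.exp ((∑ i, ((l i : ℕ) : ℂ) * x i) * z) =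
        Complex.exp ((∑ i, ((m i : ℕ) : ℂ) * x i) * z) := fun z =>
      DFunLike.congr_fun hlm (Multiplicative.ofAdd z)
    have h2 : ∀ w : ℂ, deriv (fun z : ℂ => Complex.exp (w * z)) 0 = w := by
      intro w
      have : HasDerivAt (fun z : ℂ => Complex.exp (w * z)) (Complex.exp (w * 0) * (w * 1)) 0 :=
        ((hasDerivAt_id (0:ℂ)).const_mul w).cexp
      rw [this.deriv]; simp
    have h3 := h2 (∑ i, ((l i : ℕ) : ℂ) * x i)
    rw [funext h1, h2] at h3
    have := comb_inj x hx (fun j => m j) (fun j => l j) h3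
    funext j
    exact Fin.ext (congrFun this j).symm
  have hli := (linearIndependent_monoidHom (Multiplicative ℂ) ℂ).comp χ hinj
  rw [Fintype.linearIndependent_iff] at hli
  funext l
  refine hli p ?_ l
  funext z
  have := h z.toAdd
  simpa [EF, χ] using this

section arith
variable {K : Type} [Field K] [NumberField K] {d ℓ : ℕ}

/-- the cleared coefficient -/
noncomputable def cf (D : ℕ) (b : Fin d → Fin ℓ → 𝓞 K) (E : ℕ) (l : Fin d → ℕ) (m : Fin ℓ → ℕ) :
    𝓞 K := ∏ i, ∏ j, ((D : 𝓞 K) ^ (E - l i * m j) * b i j ^ (l i * m j))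

theorem house_prod_le_pow {ι : Type} (s : Finset ι) (f : ι → K) (A : ℝ)
    (h : ∀ i ∈ s, house (f i) ≤ A) : house (∏ i ∈ s, f i) ≤ A ^ s.card := by
  rw [← prod_const]
  unfold house at *
  rw [map_prod]
  exact (Finset.norm_prod_le _ _).trans (prod_le_prod (fun _ _ => norm_nonneg _) h)

theorem cf_house (D : ℕ) (b : Fin d → Fin ℓ → 𝓞 K) (B : ℝ) (hB : 1 ≤ B) (hD : (D:ℝ) ≤ B)
    (hb : ∀ i j, house (algebraMap (𝓞 K) K (b i j)) ≤ B)
    (E : ℕ) (l : Fin d → ℕ) (m : Fin ℓ → ℕ) (hE : ∀ i j, l i * m j ≤ E) :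
    house (algebraMap (𝓞 K) K (cf D b E l m)) ≤ (B ^ (d * ℓ)) ^ E := by
  unfold cf
  rw [map_prod]
  have h1 : ∀ i ∈ (univ : Finset (Fin d)), house (algebraMap (𝓞 K) K
      (∏ j, ((D : 𝓞 K) ^ (E - l i * m j) * b i j ^ (l i * m j)))) ≤ (B ^ E) ^ ℓ := by
    intro i _
    rw [map_prod]
    refine (house_prod_le_pow _ _ (B ^ E) ?_).trans (by simp)
    intro j _
    rw [map_mul, map_pow, map_pow]
    refine (house_mul_le _ _).trans ?_
    calc _ ≤ B ^ (E - l i * m j) * B ^ (l i * m j) := by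
          refine mul_le_mul ?_ ?_ (house_nonneg _) (by positivity)
          · refine (house_pow_le _ _).trans ?_
            have : house (algebraMap (𝓞 K) K (D : 𝓞 K)) = D := by
              have := house_intCast (K := K) D
              simpa using this
            rw [this]; gcongr
          · refine (house_pow_le _ _).trans ?_
            have := house_nonneg (algebraMap (𝓞 K) K (b i j))
            gcongr
            exact hb i j
      _ = B ^ E := by rw [← pow_add, Nat.sub_add_cancel (hE i j)]
  refine (house_prod_le_pow _ _ _ h1).trans (le_of_eq ?_)
  rw [card_univ, Fintype.card_fin, ← pow_mul, ← pow_mul, ← pow_mul]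
  congr 1; ring

theorem cf_embed (σ : K →+* ℂ) (x : Fin d → ℂ) (y : Fin ℓ → ℂ)
    (D : ℕ) (b : Fin d → Fin ℓ → 𝓞 K)
    (hb : ∀ i j, σ (algebraMap (𝓞 K) K (b i j)) = D * Complex.exp (x i * y j))
    (E : ℕ) (l : Fin d → ℕ) (m : Fin ℓ → ℕ) (hE : ∀ i j, l i * m j ≤ E) :
    σ (algebraMap (𝓞 K) K (cf D b E l m)) =
      ((D : ℂ) ^ (d * ℓ)) ^ E *
        Complex.exp ((∑ i, (l i : ℂ) * x i) * (∑ j, (m j : ℂ) * y j)) := by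
  unfold cf
  rw [sum_mul_sum, Complex.exp_sum]
  simp_rw [Complex.exp_sum, map_prod]
  have h1 : ∀ i j, σ (algebraMap (𝓞 K) K ((D : 𝓞 K) ^ (E - l i * m j) * b i j ^ (l i * m j))) =
      (D:ℂ) ^ E * Complex.exp ((l i : ℂ) * x i * ((m j : ℂ) * y j)) := by
    intro i j
    rw [map_mul, map_mul, map_pow, map_pow, map_pow, map_pow, hb, map_natCast, map_natCast,
      mul_pow, ← mul_assoc, ← pow_add, Nat.sub_add_cancel (hE i j), ← Complex.exp_nat_mul]
    congr 2
    push_cast; ring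
  simp_rw [h1, prod_mul_distrib]
  simp only [prod_const, card_univ, Fintype.card_fin]
  rw [← pow_mul, ← pow_mul, ← pow_mul]
  congr 2; ring

theorem EF_embed (σ : K →+* ℂ) (x : Fin d → ℂ) (y : Fin ℓ → ℂ)
    (D : ℕ) (b : Fin d → Fin ℓ → 𝓞 K)
    (hb : ∀ i j, σ (algebraMap (𝓞 K) K (b i j)) = D * Complex.exp (x i * y j))
    (E L : ℕ) (p : (Fin d → Fin L) → 𝓞 K) (m : Fin ℓ → ℕ)
    (hE : ∀ (l : Fin d → Fin L) i j, (l i : ℕ) * m j ≤ E) :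
    σ (algebraMap (𝓞 K) K (∑ l : Fin d → Fin L, cf D b E (fun i => l i) m * p l)) =
      ((D : ℂ) ^ (d * ℓ)) ^ E *
        EF x (fun l => σ (algebraMap (𝓞 K) K (p l))) (∑ j, (m j : ℂ) * y j) := by
  unfold EF
  rw [map_sum, map_sum, mul_sum]
  refine sum_congr rfl fun l _ => ?_
  rw [map_mul, map_mul, cf_embed σ x y D b hb E _ m (hE l)]
  ring

end arith

theorem param_aux (d ℓ T M : ℕ) (h : d + ℓ < d * ℓ) (hM : (2 * T + 1) ^ d ≤ M) :
    T * (2 * (2 * T + 1) ^ ℓ * M) + M ≤ M ^ ℓ := by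
  obtain _ | l := ℓ
  · omega
  have h1 : l + 2 ≤ d * l := by rw [mul_add] at h; omega
  have h2 : (2 * T + 1) ^ (l + 2) ≤ M ^ l :=
    calc (2 * T + 1) ^ (l + 2) ≤ (2 * T + 1) ^ (d * l) := Nat.pow_le_pow_right (by omega) h1
      _ = ((2 * T + 1) ^ d) ^ l := pow_mul _ _ _
      _ ≤ M ^ l := Nat.pow_le_pow_left hM l
  have h3 : 1 ≤ (2 * T + 1) ^ (l + 1) := Nat.one_le_pow _ _ (by omega)
  calc T * (2 * (2 * T + 1) ^ (l + 1) * M) + M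
      ≤ T * (2 * (2 * T + 1) ^ (l + 1) * M) + (2 * T + 1) ^ (l + 1) * M :=
        Nat.add_le_add_left (Nat.le_mul_of_pos_left _ h3) _
    _ = (2 * T + 1) ^ (l + 2) * M := by ring
    _ ≤ M ^ l * M := Nat.mul_le_mul_right _ h2
    _ = M ^ (l + 1) := (pow_succ _ _).symm

theorem main_aux {K : Type} [Field K] [NumberField K] (d ℓ : ℕ) (hd : 0 < d) (hl : 0 < ℓ)
    (h : d + ℓ < d * ℓ)
    (x : Fin d → ℂ) (hx : LinearIndependent ℚ x)
    (y : Fin ℓ → ℂ) (hy : LinearIndependent ℚ y) (σ : K →+* ℂ)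
    (D : ℕ) (hD : 0 < D) (b : Fin d → Fin ℓ → 𝓞 K)
    (hb : ∀ i j, σ (algebraMap (𝓞 K) K (b i j)) = D * Complex.exp (x i * y j)) : False := by
  obtain ⟨c, hc1, hsieg⟩ := siegel_aux K
  obtain ⟨B, hB1, hDB, hbB⟩ : ∃ B : ℝ, 1 ≤ B ∧ (D:ℝ) ≤ B ∧
      ∀ i j, house (algebraMap (𝓞 K) K (b i j)) ≤ B := by
    have h0 : ∀ i j, 0 ≤ house (algebraMap (𝓞 K) K (b i j)) := fun i j => house_nonneg _
    have h1 : 0 ≤ ∑ i, ∑ j, house (algebraMap (𝓞 K) K (b i j)) :=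
      sum_nonneg fun i _ => sum_nonneg fun j _ => h0 i j
    have h2 : (0:ℝ) ≤ D := Nat.cast_nonneg _
    refine ⟨1 + D + ∑ i, ∑ j, house (algebraMap (𝓞 K) K (b i j)), by linarith, by linarith, ?_⟩
    intro i j
    have h3 := single_le_sum (f := fun j => house (algebraMap (𝓞 K) K (b i j)))
      (fun j _ => h0 i j) (mem_univ j)
    have h4 := single_le_sum (f := fun i => ∑ j, house (algebraMap (𝓞 K) K (b i j)))
      (fun i _ => sum_nonneg fun j _ => h0 i j) (mem_univ i)
    linarith
  have big : ∀ r : ℝ, ∃ e : ℕ, r ≤ 2 ^ e := fun r => by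
    obtain ⟨e, he⟩ := pow_unbounded_of_one_lt r (one_lt_two : (1:ℝ) < 2)
    exact ⟨e, he.le⟩
  obtain ⟨e, he⟩ := big c
  obtain ⟨u, hu⟩ := big (B ^ (d * ℓ))
  obtain ⟨g, hg⟩ := big (Real.exp (5 * (∑ i, ‖x i‖) * (∑ j, ‖y j‖)))
  obtain ⟨t, ht⟩ : ∃ t, t = 2 * e + d + u := ⟨_, rfl⟩
  obtain ⟨n, hn⟩ : ∃ n, n = Module.finrank ℚ K := ⟨_, rfl⟩
  obtain ⟨T, hT⟩ : ∃ T, T = u + (d + t + g) + n * (d + t + u) := ⟨_, rfl⟩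
  have hpar := fun M => param_aux d ℓ T M h
  obtain ⟨N, hN⟩ : ∃ N, N = (2 * T + 1) ^ d := ⟨_, rfl⟩
  obtain ⟨L, hL⟩ : ∃ L, L = 2 * (2 * T + 1) ^ ℓ := ⟨_, rfl⟩
  rw [← hN, ← hL] at hpar
  have hN0 : 0 < N := by rw [hN]; positivity
  have hL0 : 0 < L := by rw [hL]; positivity
  have two1 : (1:ℝ) ≤ 2 := one_le_two
  have hLd : ∀ M, 0 < M → (L:ℝ) ^ d ≤ 2 ^ (d * (L * M)) := by
    intro M hM
    have h1 : (L:ℝ) ≤ 2 ^ L := by exact_mod_cast (Nat.lt_two_pow_self (n := L)).le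
    calc (L:ℝ) ^ d ≤ (2 ^ L) ^ d := by gcongr
      _ = 2 ^ (L * d) := (pow_mul _ _ _).symm
      _ ≤ 2 ^ (d * (L * M)) := by
        apply pow_le_pow_right₀ two1
        rw [mul_comm L d]
        exact Nat.mul_le_mul_left _ (Nat.le_mul_of_pos_right _ hM)
  have hBE : ∀ E : ℕ, (B ^ (d * ℓ)) ^ E ≤ (2:ℝ) ^ (u * E) := by
    intro E
    rw [pow_mul (2:ℝ)]
    gcongr
  have hEb : ∀ (M : ℕ) (m : Fin ℓ → ℕ), (∀ j, m j ≤ M) → ∀ (l : Fin d → Fin L) i j,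
      (l i : ℕ) * m j ≤ L * M := fun M m hm l i j => Nat.mul_le_mul (l i).2.le (hm j)
  obtain ⟨p, hp0, hpe, hph⟩ := hsieg (Fin ℓ → Fin N) (Fin d → Fin L)
    (fun m l => cf D b (L * N) (fun i => l i) (fun j => m j)) ((B ^ (d * ℓ)) ^ (L * N))
    (one_le_pow₀ (one_le_pow₀ hB1)) (by simp [hN0])
    (by
      simp only [Fintype.card_pi, Fintype.card_fin, prod_const, card_univ]
      rw [hN, hL, mul_pow, ← pow_mul, ← pow_mul, mul_comm ℓ d]
      exact Nat.mul_le_mul_right _ (Nat.le_self_pow hd.ne' 2))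
    (fun m l => cf_house D b B hB1 hDB hbB _ _ _
      (hEb N (fun j => m j) (fun j => (m j).2.le) l))
  have hP : ∀ M, N ≤ M → ∀ l, house (algebraMap (𝓞 K) K (p l)) ≤ 2 ^ (t * (L * M)) := by
    intro M hM l
    have hLN : 1 ≤ L * N := Nat.mul_pos hL0 hN0
    have hcard : ((Fintype.card (Fin d → Fin L) : ℕ) : ℝ) = (L:ℝ) ^ d := by simp
    have hple := hph l
    rw [hcard] at hple
    calc _ ≤ _ := hple
      _ ≤ 2 ^ e * (2 ^ e * 2 ^ (d * (L * N)) * 2 ^ (u * (L * N))) := by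
        have := hLd N hN0
        have := hBE (L * N)
        gcongr
      _ = 2 ^ (e + (e + d * (L * N) + u * (L * N))) := by simp only [pow_add]
      _ ≤ 2 ^ (t * (L * N)) := by
        apply pow_le_pow_right₀ two1
        rw [ht]; nlinarith
      _ ≤ 2 ^ (t * (L * M)) := by
        apply pow_le_pow_right₀ two1
        gcongr
  let F := EF x (fun l => σ (algebraMap (𝓞 K) K (p l)))
  have hup : ∀ M, N ≤ M → (∀ m : Fin ℓ → ℕ, (∀ j, m j < M) → F (∑ j, (m j : ℂ) * y j) = 0) →
      ∀ z : ℂ, ‖z‖ ≤ M * ∑ j, ‖y j‖ → ‖F z‖ * 2 ^ (M ^ ℓ) ≤ 2 ^ ((d + t + g) * (L * M)) := by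
    intro M hM h0 z hz
    have hM0 : 0 < M := by omega
    refine (EF_schwarz hl x _ (2 ^ (t * (L * M)))
      (fun l => (norm_embedding_le_house _ σ).trans (hP M hM l)) (by positivity)
      y hy M hM0 h0 z hz).trans ?_
    calc _ ≤ (2:ℝ) ^ (d * (L * M)) * (2 ^ (t * (L * M)) * (2 ^ g) ^ (L * M)) := by
          have := hLd M hM0
          gcongr
      _ = _ := by rw [← pow_mul]; ring
  have hbase : ∀ m : Fin ℓ → ℕ, (∀ j, m j < N) → F (∑ j, (m j : ℂ) * y j) = 0 := by
    intro m hm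
    have h1 := congrFun hpe (fun j => ⟨m j, hm j⟩)
    have h2 := EF_embed σ x y D b hb (L * N) L p m (hEb N m (fun j => (hm j).le))
    have h3 : ∑ l : Fin d → Fin L, cf D b (L * N) (fun i => l i) m * p l = 0 := h1
    rw [h3, map_zero, map_zero] at h2
    rcases mul_eq_zero.1 h2.symm with h4 | h4
    · exact absurd h4 (pow_ne_zero _ (pow_ne_zero _ (by exact_mod_cast hD.ne')))
    · exact h4
  have hall : ∀ M, N ≤ M → ∀ m : Fin ℓ → ℕ, (∀ j, m j < M) → F (∑ j, (m j : ℂ) * y j) = 0 := by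
    intro M hM
    induction M, hM using Nat.le_induction with
    | base => exact hbase
    | succ M hM ih =>
      intro m hm
      have hm' : ∀ j, m j ≤ M := fun j => Nat.lt_succ_iff.1 (hm j)
      have hM0 : 0 < M := by omega
      by_contra hne
      have h1 := hup M hM ih _ (norm_comb_le y m M hm')
      have h2 := EF_embed σ x y D b hb (L * M) L p m (hEb M m hm')
      have hξ0 : (∑ l : Fin d → Fin L, cf D b (L * M) (fun i => l i) m * p l) ≠ 0 := by
        intro h3
        rw [h3, map_zero, map_zero] at h2
        rcases mul_eq_zero.1 h2.symm with h4 | h4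
        · exact absurd h4 (pow_ne_zero _ (pow_ne_zero _ (by exact_mod_cast hD.ne')))
        · exact hne h4
      have hξH : house (algebraMap (𝓞 K) K
          (∑ l : Fin d → Fin L, cf D b (L * M) (fun i => l i) m * p l)) ≤
          2 ^ ((d + t + u) * (L * M)) := by
        rw [map_sum]
        refine (house_sum_le_sum_house _ _).trans ?_
        calc _ ≤ ∑ l : Fin d → Fin L, (2:ℝ) ^ (u * (L * M)) * 2 ^ (t * (L * M)) := by
              refine sum_le_sum fun l _ => ?_
              rw [map_mul]
              refine (house_mul_le _ _).trans ?_
              refine mul_le_mul ?_ (hP M hM l) (house_nonneg _) (by positivity)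
              exact (cf_house D b B hB1 hDB hbB _ _ _ (hEb M m hm' l)).trans (hBE _)
          _ = (L:ℝ) ^ d * ((2:ℝ) ^ (u * (L * M)) * 2 ^ (t * (L * M))) := by simp
          _ ≤ 2 ^ (d * (L * M)) * ((2:ℝ) ^ (u * (L * M)) * 2 ^ (t * (L * M))) := by
              have := hLd M hM0
              gcongr
          _ = _ := by ring
      have h5 := liouville_aux K σ _ hξ0 _ (one_le_pow₀ two1) hξH
      rw [h2, norm_mul, ← hn] at h5
      have h6 : ‖((D : ℂ) ^ (d * ℓ)) ^ (L * M)‖ ≤ 2 ^ (u * (L * M)) := by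
        rw [norm_pow, norm_pow, Complex.norm_natCast]
        refine le_trans ?_ (hBE (L * M))
        gcongr
      have h7 : (2:ℝ) ^ (M ^ ℓ) ≤ 2 ^ (T * (L * M)) := by
        calc (2:ℝ) ^ (M ^ ℓ) = 1 * 2 ^ (M ^ ℓ) := (one_mul _).symm
          _ ≤ (‖((D : ℂ) ^ (d * ℓ)) ^ (L * M)‖ * ‖F (∑ j, (m j : ℂ) * y j)‖ *
              (2 ^ ((d + t + u) * (L * M))) ^ n) * 2 ^ (M ^ ℓ) := by gcongr
          _ = ‖((D : ℂ) ^ (d * ℓ)) ^ (L * M)‖ * (‖F (∑ j, (m j : ℂ) * y j)‖ * 2 ^ (M ^ ℓ)) *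
              (2 ^ ((d + t + u) * (L * M))) ^ n := by ring
          _ ≤ 2 ^ (u * (L * M)) * 2 ^ ((d + t + g) * (L * M)) *
              (2 ^ ((d + t + u) * (L * M))) ^ n := by gcongr
          _ = 2 ^ (T * (L * M)) := by
              rw [← pow_mul, ← pow_add, ← pow_add, hT]; congr 1; ring
      have h8 := (pow_le_pow_iff_right₀ (one_lt_two : (1:ℝ) < 2)).1 h7
      have h9 := hpar M hM
      omega
  have hF0 : ∀ z, F z = 0 := by
    intro z
    have hY : 0 < ∑ j, ‖y j‖ :=
      sum_pos (fun j _ => norm_pos_iff.2 (hy.ne_zero j)) ⟨⟨0, hl⟩, mem_univ _⟩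
    have hbd : ∀ M : ℕ, N ≤ M → ‖z‖ / (∑ j, ‖y j‖) ≤ M → ‖F z‖ * 2 ^ M ≤ 1 := by
      intro M hM hzM
      have h1 := hup M hM (hall M hM) z ((div_le_iff₀ hY).1 hzM)
      have h2 := hpar M hM
      have h3 : (d + t + g) * (L * M) ≤ T * (L * M) := by
        apply Nat.mul_le_mul_right
        rw [hT, add_right_comm]; omega
      have h4 : ‖F z‖ * (2 ^ M * 2 ^ (T * (L * M))) ≤ 1 * 2 ^ (T * (L * M)) := by
        calc _ ≤ ‖F z‖ * 2 ^ (M ^ ℓ) := by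
              rw [← pow_add]
              gcongr
              omega
          _ ≤ _ := h1
          _ ≤ 1 * 2 ^ (T * (L * M)) := by
              rw [one_mul]
              exact pow_le_pow_right₀ two1 h3
      rw [← mul_assoc] at h4
      exact le_of_mul_le_mul_right h4 (by positivity)
    by_contra hne
    have hpos : 0 < ‖F z‖ := norm_pos_iff.2 hne
    obtain ⟨m1, hm1⟩ := exists_nat_ge (‖z‖ / (∑ j, ‖y j‖))
    obtain ⟨m2, hm2⟩ := pow_unbounded_of_one_lt (1 / ‖F z‖) (one_lt_two : (1:ℝ) < 2)
    have h1 := hbd (N + m1 + m2) (by omega) (hm1.trans (by push_cast; linarith [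
      (Nat.cast_nonneg N : (0:ℝ) ≤ N), (Nat.cast_nonneg m2 : (0:ℝ) ≤ m2)]))
    have h2 : (2:ℝ) ^ m2 ≤ 2 ^ (N + m1 + m2) := pow_le_pow_right₀ two1 (by omega)
    rw [div_lt_iff₀ hpos] at hm2
    nlinarith
  have hz := EF_indep x hx _ hF0
  apply hp0
  funext l
  have h1 : σ (algebraMap (𝓞 K) K (p l)) = 0 := congrFun hz l
  rw [map_eq_zero] at h1
  exact (map_eq_zero_iff _ RingOfIntegers.coe_injective).1 h1

/-- **Six Exponentials Theorem.** Let `x₁, …, x_d` and `y₁, …, y_ℓ` be complex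
numbers, each family linearly independent over `ℚ`, with `dℓ > d + ℓ`. Then at
least one of the numbers `e^{x_i y_j}` is transcendental. -/
theorem six_exponentials_theorem
    (d ℓ : ℕ) (hd : 0 < d) (hl : 0 < ℓ) (h : d + ℓ < d * ℓ)
    (x : Fin d → ℂ) (hx : LinearIndependent ℚ x)
    (y : Fin ℓ → ℂ) (hy : LinearIndependent ℚ y) :
    ∃ (i : Fin d) (j : Fin ℓ), Transcendental ℚ (Complex.exp (x i * y j)) := by
  by_contra hcon
  push Not at hcon
  have halg : ∀ i j, IsAlgebraic ℚ (Complex.exp (x i * y j)) := by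
    intro i j
    have := hcon i j
    rwa [Transcendental, not_not] at this
  let S : Set ℂ := Set.range (fun ij : Fin d × Fin ℓ => Complex.exp (x ij.1 * y ij.2))
  let K := IntermediateField.adjoin ℚ S
  have hfin : FiniteDimensional ℚ K := by
    apply IntermediateField.finiteDimensional_adjoin
    rintro _ ⟨ij, rfl⟩
    exact (halg _ _).isIntegral
  have : NumberField K := { to_charZero := inferInstance, to_finiteDimensional := hfin }
  let σ : K →+* ℂ := algebraMap K ℂ
  let a : Fin d → Fin ℓ → K := fun i j =>
    ⟨Complex.exp (x i * y j), IntermediateField.subset_adjoin ℚ S ⟨(i, j), rfl⟩⟩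
  have hex : ∀ ij : Fin d × Fin ℓ, ∃ n : ℕ, 0 < n ∧ IsIntegral ℤ ((n : K) * a ij.1 ij.2) := by
    intro ij
    have h1 : IsAlgebraic ℤ (a ij.1 ij.2) :=
      (IsFractionRing.isAlgebraic_iff ℤ ℚ K).2 (Algebra.IsAlgebraic.isAlgebraic _)
    obtain ⟨z, hz, hint⟩ := h1.exists_integral_multiple
    refine ⟨z.natAbs, Int.natAbs_pos.2 hz, ?_⟩
    rw [zsmul_eq_mul] at hint
    rcases Int.natAbs_eq z with h2 | h2
    · rw [h2] at hint; simpa using hint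
    · rw [h2] at hint; simpa using hint.neg
  choose n hn0 hn using hex
  let D : ℕ := ∏ ij, n ij
  have hint : ∀ i j, IsIntegral ℤ ((D : K) * a i j) := by
    intro i j
    have h1 : n (i, j) ∣ D := dvd_prod_of_mem _ (mem_univ _)
    obtain ⟨q, hq⟩ := h1
    have h2 : (D : K) * a i j = (q : K) * ((n (i, j) : K) * a i j) := by
      rw [hq]; push_cast; ring
    rw [h2]
    exact (by simpa using (isIntegral_algebraMap (R := ℤ) (A := K) (x := (q : ℤ)))
      : IsIntegral ℤ (q : K)).mul (hn (i, j))
  refine main_aux (K := K) d ℓ hd hl h x hx y hy σ D (prod_pos fun ij _ => hn0 ij)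
    (fun i j => ⟨(D : K) * a i j, hint i j⟩) ?_
  intro i j
  change σ ((D : K) * a i j) = _
  rw [map_mul, map_natCast]
  rfl
end

section
/- Let n ≥ 1, let σ = (σ_1, …, σ_n) and τ = (τ_1, …, τ_n) be n-tuples of nonnegative integers, and let s = (s_1, …, s_n) and t = (t_1, …, t_n) be n-tuples of complex numbers. Then D^σ(z ↦ z^τ e^{⟨t, z⟩}) evaluated at s equals D^τ(z ↦ z^σ e^{⟨s, z⟩}) evaluated at t; here both sides are complex numbers. -/
/-- The partial derivative `∂/∂z_i` of a function on `ℂ^n`. -/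
noncomputable def partialDerivC (n : ℕ) (i : Fin n) (f : (Fin n → ℂ) → ℂ) :
    (Fin n → ℂ) → ℂ :=
  fun z => fderiv ℂ f z (Pi.single i 1)

/-- The partial differential operator
`D^σ = (∂/∂z_1)^{σ_1} ⋯ (∂/∂z_n)^{σ_n}`. -/
noncomputable def Dpow (n : ℕ) (σ : Fin n → ℕ) (f : (Fin n → ℂ) → ℂ) :
    (Fin n → ℂ) → ℂ :=
  (List.finRange n).foldr (fun i g => (partialDerivC n i)^[σ i] g) f

lemma fb_one (a b : ℕ) (s t : ℂ) :
    deriv^[a] (fun z : ℂ => z ^ b * Complex.exp (t * z)) s =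
      ∑ k ∈ Finset.range (a + b + 1), ((a.choose k : ℂ) * (b.choose k) * (k.factorial)) *
        (s ^ (b - k) * t ^ (a - k)) * Complex.exp (t * s) := by
  rw [← iteratedDeriv_eq_iterate]
  have h := iteratedDeriv_mul (n := a) (x := s) (f := fun z : ℂ => z ^ b)
    (g := fun z : ℂ => Complex.exp (t * z)) (by fun_prop) (by fun_prop)
  have e : (fun z : ℂ => z ^ b * Complex.exp (t * z)) =
    (fun z : ℂ => z ^ b) * (fun z : ℂ => Complex.exp (t * z)) := rfl
  rw [e, h]
  refine Eq.trans ?_ (Finset.sum_subset (s₁ := Finset.range (a + 1))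
    (Finset.range_mono (by omega)) ?_)
  · refine Finset.sum_congr rfl fun k _ => ?_
    rw [iteratedDeriv_pow, iteratedDeriv_cexp_const_mul,
      Nat.descFactorial_eq_factorial_mul_choose]
    push_cast
    ring
  · intro k _ hk
    have : a.choose k = 0 := Nat.choose_eq_zero_of_lt (by simpa using hk)
    simp [this]

lemma fb_partial (n : ℕ) (i : Fin n) (g : Fin n → ℂ → ℂ) (hg : ∀ j, Differentiable ℂ (g j)) :
    partialDerivC n i (fun z => ∏ j, g j (z j)) =
      fun z => ∏ j, Function.update g i (deriv (g i)) j (z j) := by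
  funext z
  unfold partialDerivC
  have h : HasFDerivAt (fun z : Fin n → ℂ => ∏ j, g j (z j)) _ z :=
    HasFDerivAt.finsetProd (u := Finset.univ) (g := fun j (z : Fin n → ℂ) => g j (z j))
    (g' := fun j => (deriv (g j) (z j)) • (ContinuousLinearMap.proj j : (Fin n → ℂ) →L[ℂ] ℂ))
    (x := z) (fun j _ => by
      have h1 := ((hg j) (z j)).hasDerivAt
      exact h1.comp_hasFDerivAt z (ContinuousLinearMap.proj (R := ℂ) (φ := fun _ : Fin n => ℂ) j).hasFDerivAt)
  rw [h.fderiv]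
  rw [← Finset.mul_prod_erase Finset.univ _ (Finset.mem_univ i)]
  simp only [ContinuousLinearMap.sum_apply, ContinuousLinearMap.smul_apply,
    ContinuousLinearMap.proj_apply, smul_eq_mul, Function.update_self]
  rw [Finset.sum_eq_single i]
  · rw [Pi.single_eq_same, mul_one, mul_comm]
    congr 1
    refine Finset.prod_congr rfl fun j hj => ?_
    rw [Function.update_of_ne (Finset.ne_of_mem_erase hj)]
  · intro j _ hj
    rw [Pi.single_eq_of_ne hj]; simp
  · simp

lemma fb_diff_iter (k : ℕ) (f : ℂ → ℂ) (hf : Differentiable ℂ f) :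
    Differentiable ℂ (deriv^[k] f) := by
  induction k with
  | zero => simpa
  | succ k ih => rw [Function.iterate_succ_apply']; exact ih.deriv

lemma fb_partial_iter (n : ℕ) (i : Fin n) (k : ℕ) (g : Fin n → ℂ → ℂ)
    (hg : ∀ j, Differentiable ℂ (g j)) :
    (partialDerivC n i)^[k] (fun z => ∏ j, g j (z j)) =
      fun z => ∏ j, Function.update g i (deriv^[k] (g i)) j (z j) := by
  induction k with
  | zero => simp
  | succ k ih =>
    rw [Function.iterate_succ_apply', ih, fb_partial]
    · simp [Function.iterate_succ_apply']
    · intro j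
      by_cases h : j = i
      · subst h; simpa using fb_diff_iter k _ (hg j)
      · simpa [h] using hg j

lemma fb_foldr (n : ℕ) (σ : Fin n → ℕ) (g : Fin n → ℂ → ℂ)
    (hg : ∀ j, Differentiable ℂ (g j)) (l : List (Fin n)) (hl : l.Nodup) :
    l.foldr (fun i f => (partialDerivC n i)^[σ i] f) (fun z => ∏ j, g j (z j)) =
      fun z => ∏ j, (deriv^[if j ∈ l then σ j else 0] (g j)) (z j) := by
  induction l with
  | nil => simp
  | cons i l ih =>
    rw [List.nodup_cons] at hl
    rw [List.foldr_cons, ih hl.2,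
      fb_partial_iter n i (σ i) (fun j => deriv^[if j ∈ l then σ j else 0] (g j))
        (fun j => fb_diff_iter _ _ (hg j))]
    funext z
    refine Finset.prod_congr rfl fun j _ => ?_
    by_cases h : j = i
    · subst h; simp [hl.1]
    · simp [h]

lemma fb_main (n : ℕ) (σ τ : Fin n → ℕ) (s t : Fin n → ℂ) :
    Dpow n σ (fun z => (∏ i, z i ^ τ i) * Complex.exp (∑ i, t i * z i)) s =
      ∏ i, deriv^[σ i] (fun z : ℂ => z ^ τ i * Complex.exp (t i * z)) (s i) := by
  have e : (fun z : Fin n → ℂ => (∏ i, z i ^ τ i) * Complex.exp (∑ i, t i * z i)) =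
      fun z => ∏ i, (fun i (w : ℂ) => w ^ τ i * Complex.exp (t i * w)) i (z i) := by
    funext z
    rw [Complex.exp_sum, Finset.prod_mul_distrib]
  unfold Dpow
  have h := fb_foldr n σ (fun i (w : ℂ) => w ^ τ i * Complex.exp (t i * w))
    (fun j => by fun_prop) _ (List.nodup_finRange n)
  rw [e]
  refine (congrFun h s).trans ?_
  simp

/-- **Fourier–Borel duality.** For multi-indices `σ, τ ∈ ℤ_{≥0}^n` and points
`s, t ∈ ℂ^n`,
`D^σ (z ↦ z^τ e^{⟨t,z⟩}) (s) = D^τ (z ↦ z^σ e^{⟨s,z⟩}) (t)`. -/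
theorem fourier_borel_duality
    (n : ℕ) (hn : 1 ≤ n)
    (σ τ : Fin n → ℕ) (s t : Fin n → ℂ) :
    Dpow n σ (fun z => (∏ i, z i ^ τ i) * Complex.exp (∑ i, t i * z i)) s =
    Dpow n τ (fun z => (∏ i, z i ^ σ i) * Complex.exp (∑ i, s i * z i)) t := by
  rw [fb_main, fb_main]
  refine Finset.prod_congr rfl fun i _ => ?_
  rw [fb_one, fb_one, add_comm (τ i) (σ i)]
  refine Finset.sum_congr rfl fun k _ => ?_
  rw [mul_comm (s i) (t i)]
  ring
end

section
/- Let A be a countable subset of ℂ and, for each pair (α, s) with α ∈ A and s a nonnegative integer, let E_{α,s} be a dense subset of ℂ. Then there exists a transcendental entire function f such that the s-th derivative f^{(s)}(α) belongs to E_{α,s} for every α ∈ A and every nonnegative integer s. -/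
/-- A transcendental entire function: an entire function `ℂ → ℂ` which is not a
polynomial. -/
def IsTranscendentalEntire (f : ℂ → ℂ) : Prop :=
  Differentiable ℂ f ∧ ¬ ∃ p : Polynomial ℂ, ∀ z, f z = Polynomial.eval z p

open Polynomial Filter Topology in
theorem aux_tendsto (S : ℕ → ℂ[X]) (f : ℂ → ℂ)
    (h : TendstoLocallyUniformlyOn (fun n z => (S n).eval z) f atTop Set.univ) (k : ℕ) :
    TendstoLocallyUniformlyOn (fun n z => (derivative^[k] (S n)).eval z)
      (iteratedDeriv k f) atTop Set.univ := by
  induction k with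
  | zero => simpa using h
  | succ k ih =>
    have := ih.deriv (Eventually.of_forall fun n => (Polynomial.differentiable _).differentiableOn)
      isOpen_univ
    rw [iteratedDeriv_succ]
    refine this.congr (fun n z _ => ?_)
    simp [Function.iterate_succ_apply']

open Polynomial in
theorem aux_poly_iteratedDeriv (p : ℂ[X]) (k : ℕ) (z : ℂ) :
    iteratedDeriv k (fun z => p.eval z) z = (derivative^[k] p).eval z := by
  induction k generalizing z with
  | zero => simp
  | succ k ih =>
    rw [iteratedDeriv_succ, funext ih, Polynomial.deriv, Function.iterate_succ_apply']

open Polynomial in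
noncomputable def auxP (a : ℕ → ℂ) : ℕ → ℂ[X]
  | 0 => 1
  | n + 1 => auxP a n * (X - C (a n))

open Polynomial in
theorem auxP_ne (a : ℕ → ℂ) (n : ℕ) : auxP a n ≠ 0 := by
  induction n with
  | zero => simp [auxP]
  | succ n ih => exact mul_ne_zero ih (X_sub_C_ne_zero _)

open Polynomial Classical in
theorem auxP_mult (a : ℕ → ℂ) (x : ℂ) (n : ℕ) :
    (auxP a n).rootMultiplicity x = Nat.count (fun k => a k = x) n := by
  induction n with
  | zero => simp [auxP, Polynomial.rootMultiplicity_eq_zero]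
  | succ n ih =>
    have := auxP_ne a (n + 1)
    simp only [auxP] at this ⊢
    rw [rootMultiplicity_mul this, ih, Nat.count_succ, rootMultiplicity_X_sub_C]
    simp [eq_comm]

open Polynomial in
theorem aux_step (P S : ℂ[X]) (hP : P ≠ 0) (x : ℂ) (R : ℝ) (ε : ℝ) (hε : 0 < ε)
    (E : Set ℂ) (hE : Dense E) :
    ∃ c : ℂ, (∀ z, ‖z‖ ≤ R → ‖c * P.eval z‖ ≤ ε) ∧
      (derivative^[P.rootMultiplicity x] (S + C c * P)).eval x ∈ E := by
  obtain ⟨B, hB⟩ := (isCompact_closedBall (0 : ℂ) R).exists_bound_of_continuousOn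
    (f := fun z => P.eval z) P.continuous.continuousOn
  set v := (derivative^[P.rootMultiplicity x] P).eval x with hv
  have hv0 : v ≠ 0 := by
    rw [hv, eval_iterate_derivative_rootMultiplicity]
    simp [Nat.factorial_ne_zero, eval_divByMonic_pow_rootMultiplicity_ne_zero x hP]
  set w := (derivative^[P.rootMultiplicity x] S).eval x with hw
  have hB1 : 0 < |B| + 1 := by positivity
  have hvn : 0 < ‖v‖ := norm_pos_iff.2 hv0
  obtain ⟨e, heE, he⟩ := hE.exists_dist_lt w (ε := ε / (|B| + 1) * ‖v‖) (by positivity)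
  refine ⟨(e - w) / v, fun z hz => ?_, ?_⟩
  · have h1 : ‖(e - w) / v‖ ≤ ε / (|B| + 1) := by
      rw [norm_div, div_le_iff₀ hvn]
      rw [dist_comm, dist_eq_norm] at he
      exact he.le
    have h2 : ‖P.eval z‖ ≤ |B| + 1 := by
      have := hB z (by simpa using hz)
      have := le_abs_self B
      linarith
    rw [norm_mul]
    calc _ ≤ ε / (|B| + 1) * (|B| + 1) := by gcongr
      _ = ε := by field_simp
  · rw [iterate_map_add, iterate_derivative_C_mul, eval_add, eval_C_mul, ← hv, ← hw,
      div_mul_cancel₀ _ hv0]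
    simpa using heE

open Polynomial Filter Topology Classical in
theorem aux_main (A : Set ℂ) (hA : A.Countable) (hne : A.Nonempty)
    (E : ℂ → ℕ → Set ℂ) (hE : ∀ α ∈ A, ∀ s : ℕ, Dense (E α s)) :
    ∃ f : ℂ → ℂ, Differentiable ℂ f ∧
      ∀ α ∈ A, ∀ s : ℕ, iteratedDeriv s f α ∈ E α s := by
  obtain ⟨g, hg⟩ := hA.exists_eq_range hne
  set a : ℕ → ℂ := fun n => g n.unpair.1 with ha
  have haA : ∀ n, a n ∈ A := fun n => hg ▸ Set.mem_range_self _
  have hinf : ∀ α ∈ A, {n | a n = α}.Infinite := by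
    intro α hα
    rw [hg] at hα
    obtain ⟨k, rfl⟩ := hα
    refine Set.infinite_of_injective_forall_mem (f := fun m => Nat.pair k m) ?_ ?_
    · intro m m' h
      simpa using h
    · intro m
      simp [ha]
  have step := fun (n : ℕ) (S : ℂ[X]) => aux_step (auxP a n) S (auxP_ne a n) (a n) n ((1/2)^n)
    (by positivity) (E (a n) ((auxP a n).rootMultiplicity (a n))) (hE _ (haA n) _)
  choose c hc1 hc2 using step
  let S : ℕ → ℂ[X] := fun n => Nat.rec 0 (fun n S => S + C (c n S) * auxP a n) n
  have hS : ∀ n, S (n + 1) = S n + C (c n (S n)) * auxP a n := fun n => rfl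
  have hsum : ∀ n z, (S n).eval z = ∑ m ∈ Finset.range n, c m (S m) * (auxP a m).eval z := by
    intro n z
    induction n with
    | zero => simp [S]
    | succ n ih => rw [hS, Finset.sum_range_succ, ← ih]; simp
  set f : ℂ → ℂ := fun z => ∑' m, c m (S m) * (auxP a m).eval z with hf
  have hlim : TendstoLocallyUniformlyOn (fun n z => (S n).eval z) f atTop Set.univ := by
    rw [tendstoLocallyUniformlyOn_iff_forall_isCompact isOpen_univ]
    intro K _ hK
    obtain ⟨R, hR⟩ := hK.isBounded.exists_norm_le
    simp only [hsum]
    refine tendstoUniformlyOn_tsum_nat_eventually (u := fun n => (1/2 : ℝ)^n)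
      summable_geometric_two ?_
    filter_upwards [eventually_ge_atTop ⌈R⌉₊] with n hn z hz
    exact hc1 n _ z ((hR z hz).trans ((Nat.le_ceil R).trans (by exact_mod_cast hn)))
  refine ⟨f, ?_, ?_⟩
  · rw [← differentiableOn_univ]
    exact hlim.differentiableOn
      (Eventually.of_forall fun n => (Polynomial.differentiable _).differentiableOn) isOpen_univ
  · intro α hα s
    set n := Nat.nth (fun k => a k = α) s with hn
    have hcn : Nat.count (fun k => a k = α) n = s := Nat.count_nth_of_infinite (hinf α hα) s
    have hcn1 : Nat.count (fun k => a k = α) (n + 1) = s + 1 :=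
      Nat.count_nth_succ_of_infinite (hinf α hα) s
    have han : a n = α := Nat.nth_mem_of_infinite (hinf α hα) s
    have hmem : (derivative^[s] (S (n + 1))).eval α ∈ E α s := by
      have := hc2 n (S n)
      rw [auxP_mult, han, hcn] at this
      exact this
    have hconst : ∀ N ≥ n + 1, (derivative^[s] (S N)).eval α
        = (derivative^[s] (S (n + 1))).eval α := by
      intro N hN
      induction N, hN using Nat.le_induction with
      | base => rfl
      | succ N hN ih =>
        have h0 : (derivative^[s] (auxP a N)).IsRoot α := by
          apply isRoot_iterate_derivative_of_lt_rootMultiplicity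
          rw [auxP_mult]
          have := Nat.count_monotone (fun k => a k = α) hN
          omega
        rw [hS, iterate_map_add, iterate_derivative_C_mul, eval_add, eval_C_mul, h0.eq_zero, ih]
        simp
    have h1 := (aux_tendsto S f hlim s).tendsto_at (Set.mem_univ α)
    have h2 : Tendsto (fun N => (derivative^[s] (S N)).eval α) atTop
        (𝓝 ((derivative^[s] (S (n + 1))).eval α)) :=
      tendsto_const_nhds.congr' (by
        filter_upwards [eventually_ge_atTop (n + 1)] with N hN using (hconst N hN).symm)
    rw [tendsto_nhds_unique h1 h2]
    exact hmem

theorem aux_nonempty (A : Set ℂ) (hA : A.Countable) (hne : A.Nonempty)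
    (E : ℂ → ℕ → Set ℂ) (hE : ∀ α ∈ A, ∀ s : ℕ, Dense (E α s)) :
    ∃ f : ℂ → ℂ, IsTranscendentalEntire f ∧
      ∀ α ∈ A, ∀ s : ℕ, iteratedDeriv s f α ∈ E α s := by
  obtain ⟨f, hf, h⟩ := aux_main A hA hne (fun α s => E α s \ {0})
    (fun α hα s => (hE α hα s).sdiff_singleton 0)
  refine ⟨f, ⟨hf, ?_⟩, fun α hα s => (h α hα s).1⟩
  rintro ⟨p, hp⟩
  obtain ⟨α, hα⟩ := hne
  apply (h α hα (p.natDegree + 1)).2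
  rw [funext hp, aux_poly_iteratedDeriv,
    Polynomial.iterate_derivative_eq_zero (Nat.lt_succ_self _)]
  simp

/-- Let `A` be a countable subset of `ℂ` and, for each `α ∈ A` and nonnegative
integer `s`, let `E α s` be a dense subset of `ℂ`. Then there exists a
transcendental entire function `f` with `f^{(s)}(α) ∈ E α s` for all `α ∈ A` and
all `s ≥ 0`. -/
theorem exists_transcendental_entire_with_prescribed_derivatives
    (A : Set ℂ) (hA : A.Countable)
    (E : ℂ → ℕ → Set ℂ) (hE : ∀ α ∈ A, ∀ s : ℕ, Dense (E α s)) :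
    ∃ f : ℂ → ℂ, IsTranscendentalEntire f ∧
      ∀ α ∈ A, ∀ s : ℕ, iteratedDeriv s f α ∈ E α s := by
  rcases A.eq_empty_or_nonempty with rfl | hne
  · obtain ⟨f, hf, -⟩ := aux_nonempty {0} (Set.countable_singleton _) (Set.singleton_nonempty _)
      (fun _ _ => Set.univ) (fun _ _ _ => dense_univ)
    exact ⟨f, hf, by simp⟩
  · exact aux_nonempty A hA hne E hE
end

section
/- Let S be any subset of the set of algebraic complex numbers. Then there exists a transcendental entire function f whose exceptional set equals S; that is, for every algebraic number α one has f(α) algebraic if and only if α ∈ S. -/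
lemma esa_target (S : Prop) (v : ℂ) (r : ℝ) (hr : 0 < r) :
    ∃ w : ℂ, w ≠ v ∧ ‖w - v‖ ≤ r ∧ (IsAlgebraic ℚ w ↔ S) := by
  by_cases hS : S
  · obtain ⟨q1, h1, h1'⟩ := exists_rat_btwn (show v.re < v.re + r/2 by linarith)
    obtain ⟨q2, h2, h2'⟩ := exists_rat_btwn (show v.im < v.im + r/2 by linarith)
    refine ⟨(q1 : ℂ) + (q2 : ℂ) * Complex.I, ?_, ?_, ?_⟩
    · intro h
      have := congrArg Complex.re h
      simp at this
      linarith
    · refine (Complex.norm_le_abs_re_add_abs_im _).trans ?_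
      simp only [Complex.sub_re, Complex.add_re, Complex.sub_im, Complex.add_im, Complex.mul_re,
        Complex.mul_im, Complex.I_re, Complex.I_im, Complex.ratCast_re, Complex.ratCast_im]
      rw [abs_of_pos (by linarith), abs_of_pos (by linarith)]
      linarith
    · have hI : IsAlgebraic ℚ Complex.I := by
        refine ⟨Polynomial.X ^ 2 + 1, ?_, by simp⟩
        exact (Polynomial.monic_X_pow_add_C (1 : ℚ) two_ne_zero).ne_zero
      have e1 : IsAlgebraic ℚ (q1 : ℂ) := isAlgebraic_algebraMap (A := ℂ) q1
      have e2 : IsAlgebraic ℚ (q2 : ℂ) := isAlgebraic_algebraMap (A := ℂ) q2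
      exact ⟨fun _ => hS, fun _ => e1.add (e2.mul hI)⟩
  · have hc : ({x : ℂ | IsAlgebraic ℚ x} ∪ {v}).Countable :=
      (Algebraic.countable ℚ ℂ).union (Set.countable_singleton v)
    obtain ⟨w, hw, hd⟩ := (hc.dense_compl ℝ).exists_dist_lt v hr
    simp only [Set.mem_compl_iff, Set.mem_union, Set.mem_ofPred_eq, Set.mem_singleton_iff,
      not_or] at hw
    refine ⟨w, hw.2, ?_, by simp [hw.1, hS]⟩
    rw [← dist_eq_norm, dist_comm]
    exact hd.le

lemma esa_enum : ∃ a : ℕ → ℂ, Function.Injective a ∧ (∀ n, IsAlgebraic ℚ (a n)) ∧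
    ∀ x, IsAlgebraic ℚ x → ∃ n, a n = x := by
  have : Countable {x : ℂ // IsAlgebraic ℚ x} := (Algebraic.countable ℚ ℂ).to_subtype
  have : Infinite {x : ℂ // IsAlgebraic ℚ x} :=
    (Algebraic.infinite_of_charZero ℚ ℂ).to_subtype
  obtain ⟨e⟩ := nonempty_equiv_of_countable (α := ℕ) (β := {x : ℂ // IsAlgebraic ℚ x})
  exact ⟨fun n => (e n).1, fun m n h => e.injective (Subtype.ext h), fun n => (e n).2,
    fun x hx => ⟨e.symm ⟨x, hx⟩, by simp⟩⟩

theorem exceptional_set_arbitrary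
    (S : Set ℂ) (hS : ∀ α ∈ S, IsAlgebraic ℚ α) :
    ∃ f : ℂ → ℂ, IsTranscendentalEntire f ∧
      ∀ α : ℂ, IsAlgebraic ℚ α → (IsAlgebraic ℚ (f α) ↔ α ∈ S) := by
  obtain ⟨a, hinj, _, hsurj⟩ := esa_enum
  let P : ℕ → Polynomial ℂ := fun n => ∏ i ∈ Finset.range n, (Polynomial.X - Polynomial.C (a i))
  have hPev : ∀ n z, (P n).eval z = ∏ i ∈ Finset.range n, (z - a i) := by
    intro n z; simp [P, Polynomial.eval_prod]
  have hP0 : ∀ n, (P n).eval (a n) ≠ 0 := by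
    intro n
    rw [hPev, Finset.prod_ne_zero_iff]
    intro i hi h
    have := hinj (sub_eq_zero.1 h)
    simp at hi; omega
  have hPz : ∀ n k, n < k → (P k).eval (a n) = 0 := by
    intro n k h
    rw [hPev]
    exact Finset.prod_eq_zero (Finset.mem_range.2 h) (sub_self _)
  let D : ℕ → ℝ := fun n => ∏ i ∈ Finset.range n, (1 + ‖a i‖)
  have hD : ∀ n, 0 < D n := fun n => Finset.prod_pos fun i _ => by positivity
  have hPn : ∀ n z, ‖(P n).eval z‖ ≤ (1 + ‖z‖) ^ n * D n := by
    intro n z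
    rw [hPev, norm_prod]
    have : (1 + ‖z‖) ^ n * D n = ∏ i ∈ Finset.range n, ((1 + ‖z‖) * (1 + ‖a i‖)) := by
      rw [Finset.prod_mul_distrib]; simp [D]
    rw [this]
    refine Finset.prod_le_prod (fun _ _ => norm_nonneg _) fun i _ => ?_
    have := norm_sub_le z (a i)
    nlinarith [norm_nonneg z, norm_nonneg (a i), mul_nonneg (norm_nonneg z) (norm_nonneg (a i))]
  have step : ∀ (n : ℕ) (v : ℂ), ∃ c : ℂ, c ≠ 0 ∧ ‖c‖ ≤ 1 / (n.factorial * D n) ∧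
      (IsAlgebraic ℚ (v + c * (P n).eval (a n)) ↔ a n ∈ S) := by
    intro n v
    have hp : 0 < ‖(P n).eval (a n)‖ := norm_pos_iff.2 (hP0 n)
    have hf : (0 : ℝ) < n.factorial := by positivity
    have hDn := hD n
    obtain ⟨w, hw, hn, hA⟩ := esa_target (a n ∈ S) v
      (1 / (n.factorial * D n) * ‖(P n).eval (a n)‖) (by positivity)
    refine ⟨(w - v) / (P n).eval (a n), div_ne_zero (sub_ne_zero.2 hw) (hP0 n), ?_, ?_⟩
    · rw [norm_div, div_le_iff₀ hp]; exact hn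
    · rw [div_mul_cancel₀ _ (hP0 n), add_sub_cancel]; exact hA
  choose c hc0 hcn hcA using step
  let p : ℕ → Polynomial ℂ := fun n => Nat.rec 0
    (fun n q => q + Polynomial.C (c n (q.eval (a n))) * P n) n
  let d : ℕ → ℂ := fun n => c n ((p n).eval (a n))
  have hps : ∀ n, p (n+1) = p n + Polynomial.C (d n) * P n := fun n => rfl
  have hp : ∀ n z, (p n).eval z = ∑ k ∈ Finset.range n, d k * (P k).eval z := by
    intro n z
    induction n with
    | zero => simp [p]
    | succ n ih => rw [hps, Finset.sum_range_succ, ← ih]; simp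
  have hterm : ∀ (R : ℝ) n z, ‖z‖ ≤ R →
      ‖d n * (P n).eval z‖ ≤ (1 + R) ^ n / n.factorial := by
    intro R n z hz
    have hDn := hD n
    have hf : (0 : ℝ) < n.factorial := by positivity
    rw [norm_mul]
    calc ‖d n‖ * ‖(P n).eval z‖ ≤ (1 / (n.factorial * D n)) * ((1 + ‖z‖) ^ n * D n) := by
          gcongr
          · exact hcn _ _
          · exact hPn _ _
      _ = (1 + ‖z‖) ^ n / n.factorial := by field_simp
      _ ≤ _ := by gcongr
  let f : ℂ → ℂ := fun z => ∑' n, d n * (P n).eval z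
  have hfd : Differentiable ℂ f := by
    intro z
    have : DifferentiableOn ℂ f (Metric.ball 0 (‖z‖ + 1)) := by
      refine Complex.differentiableOn_tsum_of_summable_norm
        (u := fun n => (1 + (‖z‖ + 1)) ^ n / n.factorial) (Real.summable_pow_div_factorial _)
        (fun n => ?_) Metric.isOpen_ball (fun n w hw => ?_)
      · exact ((P n).differentiable.const_mul _).differentiableOn
      · exact hterm _ n w (by simpa using (Metric.mem_ball.1 hw).le)
    exact this.differentiableAt (Metric.isOpen_ball.mem_nhds (by simp))
  have hfv : ∀ n m, n < m → f (a n) = (p m).eval (a n) := by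
    intro n m hnm
    rw [hp]
    refine tsum_eq_sum fun k hk => ?_
    rw [hPz n k (by simp at hk; omega), mul_zero]
  refine ⟨f, ⟨hfd, ?_⟩, ?_⟩
  · rintro ⟨q, hq⟩
    let N := q.natDegree + 1
    have hPdeg : ∀ n, (P n).natDegree ≤ n := by
      intro n
      simp [P, Polynomial.natDegree_finsetProd_X_sub_C_eq_card]
    have hpdeg : ∀ n, (p (n+1)).natDegree ≤ n := by
      intro n
      induction n with
      | zero =>
        rw [hps]
        refine (Polynomial.natDegree_add_le_of_degree_le (n := 0) (by simp [p]) ?_)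
        exact (Polynomial.natDegree_C_mul_le _ _).trans (hPdeg 0)
      | succ n ih =>
        rw [hps (n+1)]
        exact Polynomial.natDegree_add_le_of_degree_le (ih.trans (by omega))
          ((Polynomial.natDegree_C_mul_le _ _).trans (hPdeg _))
    have hz : q - p N = 0 := by
      refine Polynomial.eq_zero_of_natDegree_lt_card_of_eval_eq_zero' _
        ((Finset.range N).image a) ?_ ?_
      · intro x hx
        obtain ⟨i, hi, rfl⟩ := Finset.mem_image.1 hx
        rw [Polynomial.eval_sub, ← hq, hfv i N (Finset.mem_range.1 hi), sub_self]
      · rw [Finset.card_image_of_injective _ hinj, Finset.card_range]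
        refine Nat.lt_succ_of_le ?_
        exact (Polynomial.natDegree_sub_le _ _).trans (max_le le_rfl (hpdeg _))
    have h1 := hfv N (N+1) (by omega)
    rw [hq, sub_eq_zero.1 hz, hps N] at h1
    simp only [Polynomial.eval_add, Polynomial.eval_mul, Polynomial.eval_C] at h1
    have h2 : d N * (P N).eval (a N) = 0 := by linear_combination -h1
    exact mul_ne_zero (hc0 _ _) (hP0 N) h2
  · intro α hα
    obtain ⟨n, rfl⟩ := hsurj α hα
    rw [hfv n (n+1) (by omega), hps]
    simp only [Polynomial.eval_add, Polynomial.eval_mul, Polynomial.eval_C]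
    exact hcA _ _
end

section
/- Let α be a nonzero algebraic complex number, let λ be a nonzero complex number with e^λ = α, and let β be an algebraic complex number with β ∉ ℚ. Then the number α^β = e^{βλ} is transcendental. -/
open scoped Nat
open NumberField

lemma gs_factor1 (r : ℕ) (a : ℂ) : ∀ (F : ℂ → ℂ), Differentiable ℂ F →
    (r : ℕ∞) ≤ analyticOrderAt F a →
    ∃ G : ℂ → ℂ, Differentiable ℂ G ∧ ∀ z, F z = (z - a) ^ r * G z := by
  induction r with
  | zero => intro F hF _; exact ⟨F, hF, by simp⟩
  | succ r ih =>
    intro F hF h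
    have h0 : F a = 0 := by
      apply apply_eq_zero_of_analyticOrderAt_ne_zero
      intro h1
      rw [h1] at h
      simp at h
    have hd : Differentiable ℂ (dslope F a) := by
      rw [← differentiableOn_univ, Complex.differentiableOn_dslope Filter.univ_mem]
      exact hF.differentiableOn
    have he : F = (fun z => z - a) * dslope F a := by
      ext z
      have := sub_smul_dslope_of_zero (f := F) h0 z
      simpa using this.symm
    have ho : analyticOrderAt F a = 1 + analyticOrderAt (dslope F a) a := by
      conv_lhs => rw [he]
      rw [analyticOrderAt_mul (by fun_prop) (hd.analyticAt a)]
      congr 1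
      have h1 : AnalyticAt ℂ (fun z => z - a) a := by fun_prop
      simp
    obtain ⟨G, hG, hG'⟩ := ih _ hd (by
      rw [ho] at h
      push_cast at h
      rw [add_comm] at h
      exact (ENat.add_le_add_iff_left ENat.one_ne_top).1 h)
    refine ⟨G, hG, fun z => ?_⟩
    have := congrFun he z
    simp only [Pi.mul_apply] at this
    rw [this, hG', pow_succ]; ring

lemma gs_factorS (r : ℕ) (S : Finset ℂ) (F : ℂ → ℂ) (hF : Differentiable ℂ F)
    (h : ∀ a ∈ S, (r : ℕ∞) ≤ analyticOrderAt F a) :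
    ∃ G : ℂ → ℂ, Differentiable ℂ G ∧ ∀ z, F z = (∏ a ∈ S, (z - a) ^ r) * G z := by
  classical
  induction S using Finset.induction_on with
  | empty => exact ⟨F, hF, by simp⟩
  | insert a S ha ih =>
    obtain ⟨G, hG, hG'⟩ := ih (fun b hb => h b (by simp [hb]))
    have hp : Differentiable ℂ (fun z => ∏ b ∈ S, (z - b) ^ r) := by fun_prop
    have ho : analyticOrderAt F a = analyticOrderAt G a := by
      have he : F = (fun z => ∏ b ∈ S, (z - b) ^ r) * G := by ext z; simp [hG']
      rw [he, analyticOrderAt_mul (hp.analyticAt a) (hG.analyticAt a),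
        (hp.analyticAt a).analyticOrderAt_eq_zero.2, zero_add]
      rw [Finset.prod_ne_zero_iff]
      intro b hb
      apply pow_ne_zero
      rw [sub_ne_zero]
      rintro rfl
      exact ha hb
    obtain ⟨H, hH, hH'⟩ := gs_factor1 r a G hG (ho ▸ h a (by simp))
    refine ⟨H, hH, fun z => ?_⟩
    rw [hG', hH', Finset.prod_insert ha]; ring

lemma gs_analytic (m r : ℕ) (F : ℂ → ℂ) (hF : Differentiable ℂ F)
    (hvan : ∀ k < r, ∀ l < m, iteratedDeriv k F (l : ℂ) = 0) (l₀ : ℕ) (hl₀ : l₀ < m)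
    (R B : ℝ) (hR : 2 * m ≤ R) (hB : ∀ z, ‖z‖ = R → ‖F z‖ ≤ B) :
    ‖iteratedDeriv r F (l₀ : ℂ)‖ ≤ r ! * ((m : ℝ) ^ r) ^ m * (B / ((R / 2) ^ r) ^ m) := by
  have hm1 : (1 : ℝ) ≤ m := by exact_mod_cast (by omega : 1 ≤ m)
  have hinj : Function.Injective (fun l : ℕ => (l : ℂ)) := Nat.cast_injective
  obtain ⟨G, hG, hG'⟩ := gs_factorS r ((Finset.range m).map ⟨_, hinj⟩) F hF (by
    intro a ha
    simp only [Finset.mem_map, Finset.mem_range, Function.Embedding.coeFn_mk] at ha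
    obtain ⟨l, hl, rfl⟩ := ha
    rw [natCast_le_analyticOrderAt_iff_iteratedDeriv_eq_zero (hF.analyticAt _)]
    exact fun k hk => hvan k hk l hl)
  simp only [Finset.prod_map, Function.Embedding.coeFn_mk] at hG'
  have hRpos : 0 < R := by linarith
  have hGb : ∀ z, ‖z‖ = R → ‖G z‖ ≤ B / ((R / 2) ^ r) ^ m := by
    intro z hz
    rw [le_div_iff₀ (by positivity), mul_comm]
    refine le_trans ?_ (hB z hz)
    rw [hG', norm_mul]
    gcongr
    rw [norm_prod]
    calc ((R / 2) ^ r) ^ m = ∏ l ∈ Finset.range m, (R / 2) ^ r := by simp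
      _ ≤ _ := by
        apply Finset.prod_le_prod
        · intros; positivity
        · intro l hl
          rw [norm_pow]
          gcongr
          have h1 := norm_sub_norm_le z (l : ℂ)
          have h2 : ‖(l : ℂ)‖ = l := by simp
          have h3 : (l : ℝ) ≤ m := by exact_mod_cast (Finset.mem_range.1 hl).le
          rw [h2, hz] at h1
          linarith
  have hGl : ‖G l₀‖ ≤ B / ((R / 2) ^ r) ^ m := by
    apply Complex.norm_le_of_forall_mem_frontier_norm_le (U := Metric.ball 0 R) Metric.isBounded_ball
      hG.diffContOnCl
    · intro z hz
      rw [frontier_ball _ hRpos.ne'] at hz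
      exact hGb z (by simpa using hz)
    · apply subset_closure
      have : (l₀ : ℝ) < m := by exact_mod_cast hl₀
      simp
      linarith
  have hH : ∀ z, F z = (z - l₀) ^ (r + 0) *
      ((∏ l ∈ (Finset.range m).erase l₀, (z - (l : ℂ)) ^ r) * G z) := by
    intro z
    rw [hG', ← Finset.mul_prod_erase _ _ (Finset.mem_range.2 hl₀)]
    simp [mul_assoc]
  have hHd : Differentiable ℂ (fun z => (∏ l ∈ (Finset.range m).erase l₀, (z - (l : ℂ)) ^ r) * G z) := by
    fun_prop
  obtain ⟨R₂, -, h2⟩ := iteratedDeriv_mul_pow_sub_of_analytic (fun z => hHd.analyticAt z) hH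
  rw [h2]
  simp only [sub_self, pow_zero, one_mul, zero_mul, add_zero, Nat.factorial_zero, Nat.cast_one, div_one]
  rw [norm_mul, norm_mul, mul_assoc]
  simp only [Complex.norm_natCast]
  gcongr
  rw [norm_prod]
  calc _ ≤ ∏ l ∈ (Finset.range m).erase l₀, (m : ℝ) ^ r := by
        apply Finset.prod_le_prod
        · intros; positivity
        · intro l hl
          rw [norm_pow]
          gcongr
          have hl' : l < m := by simp at hl; exact hl.2
          have : ((l₀ : ℂ) - l) = (((l₀ : ℤ) - (l : ℤ) : ℤ) : ℂ) := by push_cast; rfl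
          rw [this, Complex.norm_intCast]
          have h3 : |((l₀ : ℤ) - (l : ℤ))| ≤ m := by rw [abs_le]; omega
          exact_mod_cast h3
    _ ≤ _ := by
        rw [Finset.prod_const]
        apply pow_le_pow_right₀ (one_le_pow₀ hm1)
        exact (Finset.card_erase_le).trans (by simp)

/-- matrix coefficients -/
def gsE {K : Type*} [Field K] (a b c : K) (k l i j : ℕ) : K :=
  ((i : K) + j * b) ^ k * (a ^ i * c ^ j) ^ l

lemma gsE_int {K : Type*} [Field K] (D : ℕ) (a b c : K) (ha : IsIntegral ℤ ((D : K) * a))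
    (hb : IsIntegral ℤ ((D : K) * b)) (hc : IsIntegral ℤ ((D : K) * c))
    (k n l m i j q : ℕ) (hk : k ≤ n) (hl : l ≤ m) (hi : i ≤ q) (hj : j ≤ q) :
    IsIntegral ℤ ((D : K) ^ (n + 2 * (m * q)) * gsE a b c k l i j) := by
  have nat : ∀ x : ℕ, IsIntegral ℤ (x : K) := fun x => by
    simpa using (isIntegral_algebraMap (R := ℤ) (A := K) (x := (x : ℤ)))
  obtain ⟨n', rfl⟩ := Nat.exists_eq_add_of_le hk
  have h1 : i * l ≤ m * q := by rw [mul_comm]; exact Nat.mul_le_mul hl hi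
  have h2 : j * l ≤ m * q := by rw [mul_comm]; exact Nat.mul_le_mul hl hj
  obtain ⟨u, hu⟩ := Nat.exists_eq_add_of_le h1
  obtain ⟨v, hv⟩ := Nat.exists_eq_add_of_le h2
  have h3 : 2 * (m * q) = (i * l + u) + (j * l + v) := by omega
  have : (D : K) ^ (k + n' + 2 * (m * q)) * gsE a b c k l i j =
      (D : K) ^ (n' + u + v) * (i * D + j * (D * b)) ^ k * (D * a) ^ (i * l) * (D * c) ^ (j * l) := by
    rw [h3, gsE, show (i * D + j * (D * b) : K) = D * (i + j * b) by ring, mul_pow (D : K) (i + j * b)]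
    ring
  rw [this]
  exact (((((nat D).pow _).mul ((((nat i).mul (nat D)).add ((nat j).mul hb)).pow _)).mul
    (ha.pow _)).mul (hc.pow _))

lemma gsE_house {K : Type*} [Field K] [NumberField K] (a b c : K) (M N : ℝ) (hM : 1 ≤ M)
    (hN : 0 ≤ N) (ha : house a ≤ M) (hb : 1 + house b ≤ M) (hc : house c ≤ M)
    (k l m i j q : ℕ) (hl : l ≤ m) (hi : i ≤ q) (hj : j ≤ q) (hq : q ≤ M * N) :
    house (gsE a b c k l i j) ≤ (M ^ 2 * N) ^ k * M ^ (2 * (m * q)) := by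
  have h1 : i * l ≤ m * q := by rw [mul_comm]; exact Nat.mul_le_mul hl hi
  have h2 : j * l ≤ m * q := by rw [mul_comm]; exact Nat.mul_le_mul hl hj
  have hi' : (i : ℝ) ≤ q := by exact_mod_cast hi
  have hj' : (j : ℝ) ≤ q := by exact_mod_cast hj
  have hone : house (1 : K) ≤ 1 := by simpa using house_pow_le (1 : K) 0
  have hnb := house_nonneg b
  have hx : house ((i : K) + j * b) ≤ M ^ 2 * N := by
    calc house ((i : K) + j * b) ≤ house (i : K) + house (j * b : K) := house_add_le _ _
      _ ≤ i * 1 + j * house b := by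
          rw [house_nat_mul]
          have := house_nat_mul (1 : K) i
          rw [mul_one] at this
          rw [this]
          gcongr
      _ ≤ q * 1 + q * house b := by gcongr
      _ = q * (1 + house b) := by ring
      _ ≤ (M * N) * M := by gcongr
      _ = _ := by ring
  have hp : ∀ (x : K) (t : ℕ), house x ≤ M → t ≤ m * q → house (x ^ t) ≤ M ^ (m * q) := by
    intro x t hx ht
    calc house (x ^ t) ≤ house x ^ t := house_pow_le _ _
      _ ≤ M ^ t := pow_le_pow_left₀ (house_nonneg _) hx _
      _ ≤ _ := pow_le_pow_right₀ hM ht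
  have : gsE a b c k l i j = ((i : K) + j * b) ^ k * (a ^ (i * l) * c ^ (j * l)) := by
    rw [gsE]; ring
  rw [this]
  calc _ ≤ house (((i : K) + j * b) ^ k) * (house (a ^ (i * l)) * house (c ^ (j * l))) :=
        (house_mul_le _ _).trans (mul_le_mul_of_nonneg_left (house_mul_le _ _) (house_nonneg _))
    _ ≤ (M ^ 2 * N) ^ k * (M ^ (m * q) * M ^ (m * q)) := by
        have e1 := hp a _ ha h1
        have e2 := hp c _ hc h2
        have e3 := (house_pow_le ((i : K) + j * b) k).trans (pow_le_pow_left₀ (house_nonneg _) hx _)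
        have := house_nonneg (a ^ (i * l))
        have := house_nonneg (c ^ (j * l))
        have := house_nonneg (((i : K) + j * b) ^ k)
        gcongr
    _ = _ := by ring

lemma gs_siegel (K : Type*) [Field K] [NumberField K] : ∃ C : ℝ, ∀ (ι κ : Type) [Fintype ι] [Fintype κ]
    (T : Matrix ι κ (𝓞 K)) (p : ℕ) (A : ℝ), T ≠ 0 → 0 < p → Fintype.card ι = p →
    Fintype.card κ = 2 * p → (∀ k l, house ((algebraMap (𝓞 K) K) (T k l)) ≤ A) →
    ∃ ξ : κ → 𝓞 K, ξ ≠ 0 ∧ Matrix.mulVec T ξ = 0 ∧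
      ∀ l, house (ξ l : K) ≤ C * (C * (2 * p) * A) := by
  classical
  refine ⟨?_, ?_⟩
  rotate_left
  · intro ι κ _ _ T p A hT hp hι hκ hA
    obtain ⟨ξ, h1, h2, h3⟩ := house.exists_ne_zero_int_vec_house_le K T hT hp
      (show p < 2 * p by omega) hκ hA hι
    refine ⟨ξ, h1, h2, fun l => ?_⟩
    have := h3 l
    rw [show ((p : ℝ) / ((2 * p : ℕ) - p : ℝ)) = 1 by
      have : (p : ℝ) ≠ 0 := by positivity
      push_cast; field_simp; ring, Real.rpow_one] at this
    push_cast at this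
    exact this

lemma gs_nonvanish {K : Type*} [Field K] [CharZero K] (a b c : K) (hb : ∀ x : ℚ, b ≠ x) (q : ℕ)
    (η : Fin q × Fin q → K) (hη : η ≠ 0) :
    ∃ k, ∑ i, η i * gsE a b c k 0 i.1 i.2 ≠ 0 := by
  by_contra! h
  apply hη
  have hinj : Function.Injective (fun i : Fin q × Fin q => ((i.1 : ℕ) : K) + (i.2 : ℕ) * b) := by
    rintro ⟨i, j⟩ ⟨i', j'⟩ hij
    simp only at hij
    by_cases hjj : (j : ℕ) = j'
    · rw [hjj] at hij
      have : ((i : ℕ) : K) = (i' : ℕ) := by linear_combination hij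
      have := Nat.cast_injective this
      ext <;> simp_all
    · exfalso
      have hne : ((j : ℕ) : K) - (j' : ℕ) ≠ 0 := by
        rw [sub_ne_zero]; exact fun h => hjj (Nat.cast_injective h)
      apply hb ((((i' : ℕ) : ℚ) - (i : ℕ)) / ((j : ℕ) - (j' : ℕ)))
      push_cast
      rw [eq_div_iff hne]
      linear_combination hij
  let e := Fintype.equivFin (Fin q × Fin q)
  have := Matrix.eq_zero_of_forall_pow_sum_mul_pow_eq_zero (hinj.comp e.symm.injective)
    (v := η ∘ e.symm) (by
      intro k
      have hk := h k
      rw [← e.symm.sum_comp] at hk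
      simpa [gsE] using hk)
  ext i
  have h2 := congrFun this (e i)
  simpa using h2

lemma gs_deriv {K : Type*} [Field K] (σ : K →+* ℂ) (a b c : K) (lam : ℂ)
    (h1 : Complex.exp lam = σ a) (h2 : Complex.exp (σ b * lam) = σ c) (q : ℕ)
    (η : Fin q × Fin q → K) (k l : ℕ) :
    iteratedDeriv k (fun z => ∑ i, σ (η i) * Complex.exp ((((i.1 : ℕ) + (i.2 : ℕ) * σ b) * lam) * z)) (l : ℂ)
      = lam ^ k * σ (∑ i, η i * gsE a b c k l i.1 i.2) := by
  rw [iteratedDeriv_fun_sum (fun i _ => by fun_prop), map_sum, Finset.mul_sum]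
  refine Finset.sum_congr rfl fun i _ => ?_
  rw [iteratedDeriv_const_mul_field, iteratedDeriv_cexp_const_mul]
  have : Complex.exp ((((i.1 : ℕ) + (i.2 : ℕ) * σ b) * lam) * l) =
      (σ a ^ (i.1 : ℕ) * σ c ^ (i.2 : ℕ)) ^ l := by
    rw [← h1, ← h2, ← Complex.exp_nat_mul, ← Complex.exp_nat_mul, ← Complex.exp_add,
      ← Complex.exp_nat_mul]
    congr 1; ring
  simp only [this, gsE, map_mul, map_pow, map_add, map_natCast]
  rw [mul_pow _ lam]
  ring

lemma gs_norm {K : Type*} [Field K] [NumberField K] (x : K) (hx : IsIntegral ℤ x) (h0 : x ≠ 0) :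
    1 ≤ ‖Algebra.norm ℚ x‖ := by
  have h1 : IsIntegral ℤ (Algebra.norm ℚ x) := Algebra.isIntegral_norm ℚ hx
  obtain ⟨y, hy⟩ := IsIntegrallyClosed.isIntegral_iff.1 h1
  have h2 : Algebra.norm ℚ x ≠ 0 := by rwa [Algebra.norm_ne_zero_iff]
  rw [← hy] at h2 ⊢
  have hy0 : y ≠ 0 := by rintro rfl; simp at h2
  have : (1 : ℤ) ≤ |y| := Int.one_le_abs hy0
  simp only [eq_intCast]
  rw [← Rat.norm_cast_real]
  simp only [Rat.cast_intCast, Real.norm_eq_abs]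
  exact_mod_cast this

lemma gs_num (m : ℕ) (hm : 1 ≤ m) (M X N r : ℝ) (hX : 0 ≤ X) (h2m : 2 * m ≤ M) (hN : 1 ≤ N)
    (hr : N ^ 2 ≤ r) :
    r * (m : ℝ) ^ m * (X / (r / N / 2) ^ m) ≤ M ^ m * X * (N ^ 2 / N ^ m) := by
  have hr0 : 0 < r := lt_of_lt_of_le (by positivity) hr
  obtain ⟨m', rfl⟩ := Nat.exists_eq_add_of_le' hm
  generalize hmm : ((m' + 1 : ℕ) : ℝ) = μ at *
  have hμ : 0 ≤ μ := by rw [← hmm]; positivity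
  have e1 : r * μ ^ (m' + 1) * (X / (r / N / 2) ^ (m' + 1)) =
      (2 * μ) ^ (m' + 1) * X * (N ^ (m' + 1) / r ^ m') := by
    have h2 : (2 : ℝ) ^ (m' + 1) ≠ 0 := by positivity
    rw [div_pow, div_pow, mul_pow]
    field_simp
    ring
  rw [e1]
  have e2 : N ^ (m' + 1) / r ^ m' ≤ N ^ 2 / N ^ (m' + 1) := by
    rw [div_le_div_iff₀ (by positivity) (by positivity)]
    calc N ^ (m' + 1) * N ^ (m' + 1) = N ^ 2 * (N ^ 2) ^ m' := by ring
      _ ≤ _ := by gcongr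
  have hM : 0 ≤ M := by linarith
  have : 0 ≤ M ^ (m' + 1) * X := by positivity
  gcongr

theorem gs_main {K : Type*} [Field K] [NumberField K] (σ : K →+* ℂ) (a b c : K) (lam : ℂ)
    (hlam : lam ≠ 0) (h1 : Complex.exp lam = σ a) (h2 : Complex.exp (σ b * lam) = σ c)
    (hb : ∀ x : ℚ, b ≠ x) : False := by
  classical
  obtain ⟨D, hD0, hDa, hDb, hDc⟩ : ∃ D : ℕ, D ≠ 0 ∧ IsIntegral ℤ ((D : K) * a) ∧
      IsIntegral ℤ ((D : K) * b) ∧ IsIntegral ℤ ((D : K) * c) := by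
    have hZ : Algebra.IsAlgebraic ℤ K :=
      (IsFractionRing.comap_isAlgebraic_iff (A := ℤ) (K := ℚ) (C := K)).2 inferInstance
    obtain ⟨y, hy, h⟩ := Algebra.IsAlgebraic.exists_integral_multiples ℤ ({a, b, c} : Finset K)
    have key : ∀ z : K, IsIntegral ℤ (y • z) → IsIntegral ℤ ((y.natAbs : K) * z) := by
      intro z hz
      rw [zsmul_eq_mul] at hz
      rcases Int.natAbs_eq y with hy' | hy' <;> rw [hy'] at hz
      · simpa using hz
      · simpa using hz.neg
    exact ⟨y.natAbs, by simpa using hy, key _ (h _ (by simp)), key _ (h _ (by simp)),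
      key _ (h _ (by simp))⟩
  obtain ⟨C, hC⟩ := gs_siegel K
  obtain ⟨h, hh⟩ : ∃ h, Module.finrank ℚ K = h + 1 :=
    Nat.exists_eq_add_of_le' (Module.finrank_pos (R := ℚ) (M := K))
  obtain ⟨m, hm⟩ : ∃ m, m = 2 * h + 4 := ⟨_, rfl⟩
  obtain ⟨M, hM2, hMm, hMD, hMC, hMa, hMb, hMc, hMl, hMe⟩ : ∃ M : ℝ, 2 ≤ M ∧ 2 * m ≤ M ∧ D ≤ M ∧
      |C| ≤ M ∧ house a ≤ M ∧ 1 + house b ≤ M ∧ house c ≤ M ∧ ‖lam⁻¹‖ ≤ M ∧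
      Real.exp ((1 + ‖σ b‖) * ‖lam‖ * (2 * m)) ≤ M := by
    have p1 : (0 : ℝ) ≤ 2 * m := by positivity
    have p2 : (0 : ℝ) ≤ D := by positivity
    have p3 := abs_nonneg C
    have p4 := house_nonneg a
    have p5 := house_nonneg b
    have p6 := house_nonneg c
    have p7 := norm_nonneg (lam⁻¹)
    have p8 := Real.exp_nonneg ((1 + ‖σ b‖) * ‖lam‖ * (2 * m))
    refine ⟨2 + 2 * m + D + |C| + house a + (1 + house b) + house c + ‖lam⁻¹‖ +
      Real.exp ((1 + ‖σ b‖) * ‖lam‖ * (2 * m)), ?_, ?_, ?_, ?_, ?_, ?_, ?_, ?_, ?_⟩ <;> linarith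
  have hM1 : 1 ≤ M := by linarith
  have hM0 : 0 < M := by linarith
  obtain ⟨N, hN⟩ := exists_nat_gt (M ^ ((14 + 8 * m) * (h + 1)))
  have hN1 : (1 : ℝ) ≤ N := (one_le_pow₀ hM1).trans hN.le
  have hN0 : 1 ≤ N := by exact_mod_cast hN1
  obtain ⟨n, hn⟩ : ∃ n, n = 2 * m * N ^ 2 := ⟨_, rfl⟩
  obtain ⟨q, hq⟩ : ∃ q, q = 2 * m * N := ⟨_, rfl⟩
  have hqn : q ≤ n := by rw [hn, hq]; nlinarith
  have hNn : N ^ 2 ≤ n := by rw [hn]; nlinarith [Nat.zero_le (N ^ 2)]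
  have hm0 : 0 < m := by omega
  have hn0 : 0 < n := by rw [hn]; positivity
  have hq0 : 0 < q := by rw [hq]; positivity
  have hqMN : (q : ℝ) ≤ M * N := by rw [hq]; push_cast; gcongr
  -- Siegel
  obtain ⟨A, hA⟩ : ∃ A : ℝ, A = M ^ (n + 2 * (m * q)) * ((M ^ 2 * N) ^ n * M ^ (2 * (m * q))) :=
    ⟨_, rfl⟩
  obtain ⟨η, hη0, hηv, hηb⟩ : ∃ η : Fin q × Fin q → K, η ≠ 0 ∧
      (∀ k < n, ∀ l < m, ∑ i, η i * gsE a b c k l i.1 i.2 = 0) ∧ (∀ i, IsIntegral ℤ (η i)) ∧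
      ∀ i, house (η i) ≤ M * (M * (q : ℝ) ^ 2 * A) := by
    let T : Matrix (Fin n × Fin m) (Fin q × Fin q) (𝓞 K) := fun e i =>
      ⟨(D : K) ^ (n + 2 * (m * q)) * gsE a b c e.1 e.2 i.1 i.2,
        gsE_int D a b c hDa hDb hDc _ _ _ _ _ _ _ e.1.2.le e.2.2.le i.1.2.le i.2.2.le⟩
    have hT : ∀ e i, algebraMap (𝓞 K) K (T e i) =
      (D : K) ^ (n + 2 * (m * q)) * gsE a b c e.1 e.2 i.1 i.2 := fun e i => rfl
    have hDK : (D : K) ≠ 0 := by exact_mod_cast hD0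
    obtain ⟨ξ, x1, x2, x3⟩ := hC (Fin n × Fin m) (Fin q × Fin q) T (n * m) A (by
        intro h0
        have := hT (⟨0, hn0⟩, ⟨0, hm0⟩) (⟨0, hq0⟩, ⟨0, hq0⟩)
        rw [h0] at this
        simp [gsE] at this
        exact pow_ne_zero _ hDK this.symm) (by positivity) (by simp) (by
          simp only [Fintype.card_prod, Fintype.card_fin]; rw [hn, hq]; ring) (by
        intro e i
        rw [hT, hA, ← Nat.cast_pow, house_nat_mul, Nat.cast_pow]
        apply mul_le_mul _ _ (house_nonneg _) (by positivity)
        · gcongr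
        · refine (gsE_house a b c M N hM1 (by positivity) hMa hMb hMc _ _ m _ _ q e.2.2.le
            i.1.2.le i.2.2.le hqMN).trans ?_
          have : 1 ≤ M ^ 2 * N := by nlinarith
          have := e.1.2.le
          gcongr)
    refine ⟨fun i => (ξ i : K), ?_, ?_, fun i => (ξ i).2, ?_⟩
    · intro h0
      apply x1
      ext i
      simpa using congrFun h0 i
    · intro k hk l hl
      have := congrArg (algebraMap (𝓞 K) K) (congrFun x2 (⟨k, hk⟩, ⟨l, hl⟩))
      simp only [Matrix.mulVec, dotProduct, map_sum, map_mul, hT, Pi.zero_apply, map_zero,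
        mul_assoc] at this
      rw [← Finset.mul_sum] at this
      have := (mul_eq_zero.1 this).resolve_left (pow_ne_zero _ hDK)
      rw [← this]
      exact Finset.sum_congr rfl fun i _ => mul_comm _ _
    · intro i
      refine (x3 i).trans ?_
      have e1 : (2 * ((n * m : ℕ) : ℝ)) = (q : ℝ) ^ 2 := by rw [hn, hq]; push_cast; ring
      have hA0 : 0 ≤ A := by rw [hA]; positivity
      rw [e1]
      calc C * (C * (q : ℝ) ^ 2 * A) = |C| * (|C| * (q : ℝ) ^ 2 * A) := by
            rw [show C * (C * (q : ℝ) ^ 2 * A) = (C * C) * ((q : ℝ) ^ 2 * A) by ring,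
              ← abs_mul_abs_self C]; ring
        _ ≤ _ := by gcongr
  obtain ⟨hηi, hηb⟩ := hηb
  -- choice of r
  have hex : ∃ r, ∃ l < m, ∑ i, η i * gsE a b c r l i.1 i.2 ≠ 0 := by
    obtain ⟨k, hk⟩ := gs_nonvanish a b c hb q η hη0
    exact ⟨k, 0, hm0, hk⟩
  obtain ⟨r, ⟨l₀, hl₀, hξ⟩, hmin⟩ : ∃ r, (∃ l < m, ∑ i, η i * gsE a b c r l i.1 i.2 ≠ 0) ∧
      ∀ k < r, ∀ l < m, ∑ i, η i * gsE a b c k l i.1 i.2 = 0 := by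
    refine ⟨Nat.find hex, Nat.find_spec hex, fun k hk l hl => ?_⟩
    have := Nat.find_min hex hk
    push Not at this
    exact this l hl
  have hnr : n ≤ r := by
    by_contra hlt
    exact hξ (hηv r (by omega) l₀ hl₀)
  have hr1 : 1 ≤ r := by omega
  obtain ⟨ξ, hξd⟩ : ∃ ξ, ξ = ∑ i, η i * gsE a b c r l₀ i.1 i.2 := ⟨_, rfl⟩
  rw [← hξd] at hξ
  -- basic bounds
  have hmq : m * q ≤ m * r := Nat.mul_le_mul_left _ (hqn.trans hnr)
  have hNr : (N : ℝ) ^ 2 ≤ r := by exact_mod_cast hNn.trans hnr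
  have hMr : M ≤ M ^ r := le_self_pow₀ hM1 (by omega)
  have hq2 : (q : ℝ) ^ 2 ≤ (M ^ 3) ^ r := by
    have h2r : (r : ℝ) ≤ 2 ^ r := by exact_mod_cast (Nat.lt_two_pow_self (n := r)).le
    calc (q : ℝ) ^ 2 ≤ (M * N) ^ 2 := by gcongr
      _ = M * M * N ^ 2 := by ring
      _ ≤ M ^ r * M ^ r * M ^ r := by
          gcongr
          exact (hNr.trans h2r).trans (by gcongr)
      _ = _ := by ring
  have hMq : M ^ (2 * (m * q)) ≤ (M ^ (2 * m)) ^ r := by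
    rw [← pow_mul]; apply pow_le_pow_right₀ hM1; nlinarith
  have hMN1 : 1 ≤ M ^ 2 * N := by nlinarith
  have hAr : A ≤ (M ^ (3 + 4 * m) * N) ^ r := by
    rw [hA]
    calc _ ≤ M ^ r * (M ^ (2 * m)) ^ r * ((M ^ 2 * N) ^ r * (M ^ (2 * m)) ^ r) := by
          rw [pow_add]; gcongr
      _ = _ := by simp only [← mul_pow]; ring
  have hηr : ∀ i, house (η i) ≤ (M ^ (8 + 4 * m) * N) ^ r := by
    intro i
    refine (hηb i).trans ?_
    calc _ ≤ M ^ r * (M ^ r * (M ^ 3) ^ r * (M ^ (3 + 4 * m) * N) ^ r) := by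
          have hA0 : 0 ≤ A := by rw [hA]; positivity
          gcongr
      _ = _ := by simp only [← mul_pow]; ring
  have hcard : (Finset.univ : Finset (Fin q × Fin q)).card = q ^ 2 := by
    simp [Fintype.card_prod, sq]
  have hξh : house ξ ≤ (M ^ (13 + 6 * m) * N ^ 2) ^ r := by
    rw [hξd]
    calc _ ≤ ∑ i : Fin q × Fin q, (M ^ (8 + 4 * m) * N) ^ r * ((M ^ 2 * N) ^ r * (M ^ (2 * m)) ^ r) := by
          refine (house_sum_le_sum_house _ _).trans (Finset.sum_le_sum fun i _ => ?_)
          refine (house_mul_le _ _).trans ?_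
          apply mul_le_mul (hηr i) _ (house_nonneg _) (by positivity)
          refine (gsE_house a b c M N hM1 (by positivity) hMa hMb hMc _ _ m _ _ q hl₀.le
            i.1.2.le i.2.2.le hqMN).trans ?_
          gcongr
      _ = (q : ℝ) ^ 2 * ((M ^ (8 + 4 * m) * N) ^ r * ((M ^ 2 * N) ^ r * (M ^ (2 * m)) ^ r)) := by
          rw [Finset.sum_const, hcard]; simp
      _ ≤ (M ^ 3) ^ r * ((M ^ (8 + 4 * m) * N) ^ r * ((M ^ 2 * N) ^ r * (M ^ (2 * m)) ^ r)) := by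
          gcongr
      _ = _ := by simp only [← mul_pow]; ring
  -- the analytic bound
  have hξσ : ‖σ ξ‖ ≤ (M ^ (13 + 5 * m) * N * (N ^ 2 / N ^ m)) ^ r := by
    have hF : Differentiable ℂ (fun z => ∑ i : Fin q × Fin q,
        σ (η i) * Complex.exp ((((i.1 : ℕ) + (i.2 : ℕ) * σ b) * lam) * z)) := by fun_prop
    have hr0 : (0 : ℝ) < r := by exact_mod_cast hr1
    have han := gs_analytic m r _ hF (fun k hk l hl => by
        rw [gs_deriv σ a b c lam h1 h2 q η, hmin k hk l hl]; simp) l₀ hl₀ (r / N)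
        ((M ^ (12 + 4 * m) * N) ^ r) (by
          rw [le_div_iff₀ (by positivity)]
          have : ((2 * m * N : ℕ) : ℝ) ≤ r := by
            rw [← hq]; exact_mod_cast hqn.trans hnr
          exact_mod_cast this) (by
        intro z hz
        calc _ ≤ ∑ i : Fin q × Fin q, (M ^ (8 + 4 * m) * N) ^ r * M ^ r := by
              refine (norm_sum_le _ _).trans (Finset.sum_le_sum fun i _ => ?_)
              rw [norm_mul]
              apply mul_le_mul ((norm_embedding_le_house _ _).trans (hηr i)) _ (norm_nonneg _)
                (by positivity)
              refine (Complex.norm_exp_le_exp_norm _).trans ?_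
              calc _ ≤ Real.exp (r * ((1 + ‖σ b‖) * ‖lam‖ * (2 * m))) := by
                    apply Real.exp_le_exp.2
                    rw [norm_mul, norm_mul, hz]
                    have hi1 : ((i.1 : ℕ) : ℝ) ≤ q := by exact_mod_cast i.1.2.le
                    have hi2 : ((i.2 : ℕ) : ℝ) ≤ q := by exact_mod_cast i.2.2.le
                    calc _ ≤ (q * (1 + ‖σ b‖)) * ‖lam‖ * (r / N) := by
                          gcongr
                          refine (norm_add_le _ _).trans ?_
                          rw [norm_mul, Complex.norm_natCast, Complex.norm_natCast, mul_add, mul_one]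
                          gcongr
                      _ = _ := by
                          rw [hq]; push_cast; field_simp
                _ = Real.exp ((1 + ‖σ b‖) * ‖lam‖ * (2 * m)) ^ r := by
                    rw [← Real.exp_nat_mul]
                _ ≤ M ^ r := by gcongr
          _ = (q : ℝ) ^ 2 * ((M ^ (8 + 4 * m) * N) ^ r * M ^ r) := by
              rw [Finset.sum_const, hcard]; simp
          _ ≤ (M ^ 3) ^ r * ((M ^ (8 + 4 * m) * N) ^ r * M ^ r) := by gcongr
          _ = _ := by simp only [← mul_pow]; ring)
    rw [gs_deriv σ a b c lam h1 h2 q η, ← hξd, norm_mul, norm_pow] at han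
    have hfac : (r ! : ℝ) ≤ (r : ℝ) ^ r := by exact_mod_cast Nat.factorial_le_pow r
    have hnum := gs_num m hm0 M (M ^ (12 + 4 * m) * N) N r (by positivity) hMm hN1 hNr
    have han2 : ‖lam‖ ^ r * ‖σ ξ‖ ≤ (M ^ m * (M ^ (12 + 4 * m) * N) * (N ^ 2 / N ^ m)) ^ r := by
      refine han.trans ?_
      calc _ ≤ (r : ℝ) ^ r * ((m : ℝ) ^ r) ^ m *
            ((M ^ (12 + 4 * m) * N) ^ r / ((r / N / 2) ^ r) ^ m) := by gcongr
        _ = (r * (m : ℝ) ^ m * ((M ^ (12 + 4 * m) * N) / (r / N / 2) ^ m)) ^ r := by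
            rw [pow_right_comm (m : ℝ), pow_right_comm (r / N / 2 : ℝ), mul_pow _ (_ / _), div_pow _ (_ ^ m),
              mul_pow (r : ℝ)]
        _ ≤ _ := by gcongr
    calc ‖σ ξ‖ = ‖lam⁻¹‖ ^ r * (‖lam‖ ^ r * ‖σ ξ‖) := by
          rw [← mul_assoc, ← mul_pow, ← norm_mul, inv_mul_cancel₀ hlam]; simp
      _ ≤ M ^ r * (M ^ m * (M ^ (12 + 4 * m) * N) * (N ^ 2 / N ^ m)) ^ r := by gcongr
      _ = _ := by simp only [← mul_pow]; ring
  -- conclusion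
  have hDr : (D : ℝ) ^ (r + 2 * (m * q)) ≤ (M ^ (1 + 2 * m)) ^ r := by
    calc _ ≤ M ^ (r + 2 * (m * q)) := by gcongr
      _ ≤ M ^ r * (M ^ (2 * m)) ^ r := by rw [pow_add]; gcongr
      _ = _ := by simp only [← mul_pow]; ring
  have hint : IsIntegral ℤ ((D : K) ^ (r + 2 * (m * q)) * ξ) := by
    rw [hξd, Finset.mul_sum]
    refine IsIntegral.sum _ fun i _ => ?_
    rw [mul_left_comm]
    exact (hηi i).mul (gsE_int D a b c hDa hDb hDc _ _ _ _ _ _ _ le_rfl hl₀.le i.1.2.le i.2.2.le)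
  have hnorm := gs_norm _ hint (mul_ne_zero (pow_ne_zero _ (by exact_mod_cast hD0)) hξ)
  have hnorm2 := hnorm.trans (norm_norm_le_norm_mul_house_pow _ σ)
  have hbd : ‖σ ((D : K) ^ (r + 2 * (m * q)) * ξ)‖ ≤
      (M ^ (14 + 8 * m) * N * (N ^ 2 / N ^ m)) ^ r := by
    rw [map_mul, norm_mul, map_pow, map_natCast, norm_pow, Complex.norm_natCast]
    calc _ ≤ (M ^ (1 + 2 * m)) ^ r * (M ^ (13 + 5 * m) * N * (N ^ 2 / N ^ m)) ^ r := by gcongr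
      _ = (M ^ (14 + 7 * m) * N * (N ^ 2 / N ^ m)) ^ r := by simp only [← mul_pow]; ring
      _ ≤ _ := by gcongr <;> first | exact hM1 | omega
  have hbh : house ((D : K) ^ (r + 2 * (m * q)) * ξ) ≤ (M ^ (14 + 8 * m) * N ^ 2) ^ r := by
    rw [← Nat.cast_pow, house_nat_mul, Nat.cast_pow]
    have := house_nonneg ξ
    calc _ ≤ (M ^ (1 + 2 * m)) ^ r * (M ^ (13 + 6 * m) * N ^ 2) ^ r := by gcongr
      _ = _ := by simp only [← mul_pow]; ring
  have hfin : (1 : ℝ) ≤ (M ^ (14 + 8 * m) * N * (N ^ 2 / N ^ m)) ^ r *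
      ((M ^ (14 + 8 * m) * N ^ 2) ^ r) ^ h := by
    refine hnorm2.trans ?_
    rw [hh, Nat.add_sub_cancel]
    have := house_nonneg ((D : K) ^ (r + 2 * (m * q)) * ξ)
    gcongr
  have heq : (M ^ (14 + 8 * m) * N * (N ^ 2 / N ^ m)) ^ r *
      ((M ^ (14 + 8 * m) * N ^ 2) ^ r) ^ h = (M ^ ((14 + 8 * m) * (h + 1)) / N) ^ r := by
    rw [pow_right_comm _ r h, ← mul_pow]
    congr 1
    rw [show (N : ℝ) ^ m = (N ^ 2) ^ h * N ^ 4 by rw [hm]; ring]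
    have : (N : ℝ) ≠ 0 := by positivity
    rw [pow_mul, pow_succ, mul_pow]
    generalize M ^ (14 + 8 * m) = Y
    field_simp
    ring
  rw [heq] at hfin
  have : (M ^ ((14 + 8 * m) * (h + 1)) / N) ^ r < 1 := by
    apply pow_lt_one₀ (by positivity) _ (by omega)
    rw [div_lt_one (by positivity)]
    exact hN
  linarith

/-- **Gel'fond–Schneider theorem (Hilbert's seventh problem).** Let `α` be a
nonzero algebraic number, `λ ≠ 0` with `e^λ = α`, and `β` an algebraic number
with `β ∉ ℚ`. Then `α^β = e^{βλ}` is transcendental. -/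
theorem gelfond_schneider
    (α lam β : ℂ) (hα : α ≠ 0) (hαalg : IsAlgebraic ℚ α)
    (hlam : lam ≠ 0) (hexp : Complex.exp lam = α)
    (hβalg : IsAlgebraic ℚ β) (hβ : β ∉ Set.range ((↑) : ℚ → ℂ)) :
    Transcendental ℚ (Complex.exp (β * lam)) := by
  intro hγ
  let S : Set ℂ := {α, β, Complex.exp (β * lam)}
  let K := IntermediateField.adjoin ℚ S
  have hfd : FiniteDimensional ℚ K := by
    apply IntermediateField.finiteDimensional_adjoin
    intro x hx
    simp only [S, Set.mem_insert_iff, Set.mem_singleton_iff] at hx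
    rcases hx with rfl | rfl | rfl
    · exact hαalg.isIntegral
    · exact hβalg.isIntegral
    · exact hγ.isIntegral
  have : NumberField K := { to_charZero := inferInstance, to_finiteDimensional := hfd }
  have hmem : ∀ x ∈ S, x ∈ K := fun x hx => IntermediateField.subset_adjoin ℚ S hx
  refine gs_main (K := K) (algebraMap K ℂ) ⟨α, hmem _ (by simp [S])⟩ ⟨β, hmem _ (by simp [S])⟩
    ⟨Complex.exp (β * lam), hmem _ (by simp [S])⟩ lam hlam hexp rfl ?_
  intro x hx
  apply hβ
  refine ⟨x, ?_⟩
  have := congrArg (algebraMap K ℂ) hx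
  rw [map_ratCast] at this
  exact this.symm
end
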